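/- Let n ≥ 1, let χ be an irreducible complex character of the alternating group A_n, and let g ∈ A_n be an element with χ(g) ≠ 0. Then the order of g divides |A_n|/χ(1); equivalently, o(g)·χ(1) divides |A_n| = n!/2 (for n ≥ 2). -/

import Mathlib

/-!
Fix an odd permutation `τ` and write `Θ = χ + χ^τ` and `Δ = χ - χ^τ`, extended by zero to the
symmetric group `Sₙ`; put `M = |Aₙ| / χ(1)`.

If `Θ(g) ≠ 0`, expand `Θ = ∑ m_α ψ_α` in the irreducible characters of `Sₙ` given by Frobenius'
formula; here `∑ m_α² ≤ 2`. For a cycle `c` of `g = c h`, the Murnaghan–Nakayama rule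
gives `Θ(c h) = ∑ s_β ψ_β(h)`, and integrality of the central character of `χ`, averaged against
`ψ_β(h)`, gives `o(c) ∣ M s_β` for all `β`. If some `s_β = ± 1` we are done. Otherwise the nonzero
`s_β` are `± 2`, which suffices for `o(c)` odd. For `o(c)` even there is only one such `β`, and
then `0 = Θ(c) = s_β ψ_β(1) ≠ 0` because `c` is odd, a contradiction.

The case `Θ(g) = 0 ≠ χ(g)` does not occur. Indeed `Δ(g) = 2 χ(g) ≠ 0` forces the centralizer of `g`
into `Aₙ`, so the cycles of `g` have distinct odd lengths, with product `Q`, and the norm of `Δ`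
yields `|Δ(g)|² ≤ Q`. Gauss sums provide an idempotent of `ℂ[Aₙ]` on which `Δ` takes the value
`u Δ(g)` with `u⁴ Q² = 1`. Characters take integer values on idempotents, so `Δ(g)⁴ = b⁴ Q²`
with `b` an integer, and the bound leaves `Δ(g)⁴ = Q²`. Hence `Q² / 16 = χ(g)⁴` is an algebraic
integer, contradicting that `Q` is odd.
-/

namespace AlternatingCharacter

open Finset MvPolynomial Equiv

/-! ### Words and cycle power sums -/

section Coefficients

variable {σ R : Type*} [Fintype σ] [CommSemiring R]

/-- The coefficient of `∏ i, X i ^ α i`, with the exponent given as a function on the finite set of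
variables rather than as a finitely supported one. -/
noncomputable def coeffAt (α : σ → ℕ) : MvPolynomial σ R →+ R :=
  coeffAddMonoidHom (Finsupp.equivFunOnFinite.symm α)

theorem coeffAt_apply (α : σ → ℕ) (f : MvPolynomial σ R) :
    coeffAt α f = coeff (Finsupp.equivFunOnFinite.symm α) f := rfl

theorem eq_of_coeffAt_eq {f g : MvPolynomial σ R} (h : ∀ α, coeffAt α f = coeffAt α g) : f = g :=
  MvPolynomial.ext _ _ fun m => by simpa [coeffAt_apply] using h m

theorem monomial_equivFunOnFinite_symm (α : σ → ℕ) :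
    monomial (Finsupp.equivFunOnFinite.symm α) (1 : R) = ∏ i, X i ^ α i := by
  simp [monomial_eq, Finsupp.prod_fintype]

theorem coeffAt_prod_X_pow (α β : σ → ℕ) :
    coeffAt α (∏ i, X i ^ β i : MvPolynomial σ R) = if α = β then 1 else 0 := by
  classical
  rw [← monomial_equivFunOnFinite_symm, coeffAt_apply, coeff_monomial]
  simp [eq_comm]

end Coefficients

section Words

variable {ι A : Type*}

theorem comp_perm_zpow_eq_of_comp_eq {g : Perm ι} {v : ι → A} (h : v ∘ g = v) (z : ℤ) :
    v ∘ ⇑(g ^ z) = v := by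
  have hinv : v ∘ ⇑g⁻¹ = v := by
    conv_lhs => rw [← h, Function.comp_assoc, ← Perm.coe_mul, mul_inv_cancel]
    rfl
  induction z with
  | zero => rfl
  | succ n ih => rw [zpow_add_one, Perm.coe_mul, ← Function.comp_assoc, ih, h]
  | pred n ih => rw [zpow_sub_one, Perm.coe_mul, ← Function.comp_assoc, ih, hinv]

theorem comp_perm_inv_eq_iff (g : Perm ι) (v : ι → A) : v ∘ ⇑g⁻¹ = v ↔ v ∘ g = v :=
  ⟨fun h => by simpa using comp_perm_zpow_eq_of_comp_eq h (-1),
    fun h => by simpa using comp_perm_zpow_eq_of_comp_eq h (-1)⟩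

theorem apply_eq_of_sameCycle {g : Perm ι} {v : ι → A} (h : v ∘ g = v) {i j : ι}
    (hij : g.SameCycle i j) : v i = v j := by
  obtain ⟨z, rfl⟩ := hij
  exact (congrFun (comp_perm_zpow_eq_of_comp_eq h z) i).symm

variable [Fintype ι] [DecidableEq A]

/-- The content of a word `v : ι → A`: how often it uses each letter. -/
def content (v : ι → A) (a : A) : ℕ := #{i | v i = a}

theorem content_comp_perm (v : ι → A) (g : Perm ι) : content (v ∘ g) = content v :=
  funext fun _ => card_equiv g (by simp)

theorem exists_perm_comp_eq_of_content_eq {v w : ι → A} (h : content v = content w) :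
    ∃ g : Perm ι, w ∘ g = v := by
  have fiberEquiv (a : A) : Nonempty ({i // v i = a} ≃ {i // w i = a}) := by
    rw [← Fintype.card_eq, Fintype.card_subtype, Fintype.card_subtype]
    exact congrFun h a
  refine ⟨(sigmaFiberEquiv v).symm.trans
    ((sigmaCongrRight fun a => (fiberEquiv a).some).trans (sigmaFiberEquiv w)), ?_⟩
  funext i
  exact ((fiberEquiv (v i)).some ⟨i, rfl⟩).2

theorem exists_content_eq [Fintype A] (κ : A → ℕ) (h : ∑ a, κ a = Fintype.card ι) :
    ∃ w : ι → A, content w = κ := by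
  obtain ⟨e⟩ : Nonempty (ι ≃ Σ a, Fin (κ a)) := by
    rw [← Fintype.card_eq]; simp [h]
  refine ⟨fun i => (e i).1, funext fun a => ?_⟩
  rw [content, ← Fintype.card_subtype,
    Fintype.card_congr (e.subtypeEquiv (q := fun x => x.1 = a) fun _ => Iff.rfl),
    Fintype.card_congr (sigmaSubtype a), Fintype.card_fin]

theorem prod_comp_eq_prod_pow_content [Fintype A] {M : Type*} [CommMonoid M] (f : A → M)
    (v : ι → A) : ∏ i, f (v i) = ∏ a, f a ^ content v a := by
  simp only [← prod_fiberwise' univ v f, prod_const, content]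

theorem sum_content [Fintype A] (v : ι → A) : ∑ a, content v a = Fintype.card ι := by
  simp only [content, ← card_eq_sum_card_fiberwise (f := v) (s := univ) (t := univ) (by simp),
    card_univ]

theorem sum_content_prodMk {B : Type*} [DecidableEq B] [Fintype B] (w : ι → A × B) (a : A) :
    ∑ b, content w (a, b) = content (Prod.fst ∘ w) a := by
  simp only [content]
  rw [card_eq_sum_card_fiberwise (f := fun i => (w i).2) (t := univ) (by simp)]
  simp only [filter_filter, Prod.ext_iff, Function.comp_apply]

variable [DecidableEq ι]

theorem card_comp_eq_eq_card_stabilizer {v w : ι → A} (h : content w = content v) :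
    #{g : Perm ι | v ∘ g = w} = #{g : Perm ι | w ∘ g = w} := by
  obtain ⟨g₀, rfl⟩ := exists_perm_comp_eq_of_content_eq h
  refine card_equiv (Equiv.mulLeft g₀⁻¹) fun g => ?_
  have hcomp : (v ∘ g₀) ∘ ⇑(g₀⁻¹ * g) = v ∘ g := by ext; simp
  rw [mem_filter_univ, mem_filter_univ, coe_mulLeft, hcomp]

/-- Orbit–stabilizer for the action of `Perm ι` on the words of content `κ`. -/
theorem sum_card_stabilizer_eq_factorial [Fintype A] (κ : A → ℕ)
    (h : ∑ a, κ a = Fintype.card ι) :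
    ∑ w : ι → A with content w = κ, #{g : Perm ι | w ∘ g = w} = (Fintype.card ι).factorial := by
  obtain ⟨v, rfl⟩ := exists_content_eq κ h
  rw [← Fintype.card_perm, ← card_univ, card_eq_sum_card_fiberwise
    (f := fun g : Perm ι => v ∘ g) (t := ({w | content w = content v} : Finset (ι → A)))]
  · refine sum_congr rfl fun w hw => ?_
    exact (card_comp_eq_eq_card_stabilizer (mem_filter.1 hw).2).symm
  · intro g _
    simp [content_comp_perm]

theorem sum_card_stabilizer_smul_prod [Fintype A] {M : Type*} [CommSemiring M] (f : A → M)
    (κ : A → ℕ) (h : ∑ a, κ a = Fintype.card ι) :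
    ∑ w : ι → A with content w = κ, #{g : Perm ι | w ∘ g = w} • ∏ i, f (w i) =
      (Fintype.card ι).factorial • ∏ a, f a ^ κ a := by
  rw [← sum_card_stabilizer_eq_factorial κ h, sum_smul]
  refine sum_congr rfl fun w hw => ?_
  rw [prod_comp_eq_prod_pow_content, (mem_filter.1 hw).2]

end Words

section CyclePowerSum

variable {σ ι : Type*} [Fintype σ] [DecidableEq σ] [Fintype ι] [DecidableEq ι]

variable (σ) in
/-- The power sum symmetric polynomial `p_g` attached to the cycle type of `g`: a `g`-fixed word
chooses one variable for each cycle of `g`, fixed points included. -/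
noncomputable def cyclePowerSum (g : Perm ι) : MvPolynomial σ ℤ :=
  ∑ v : ι → σ with v ∘ g = v, ∏ i, X (v i)

theorem cyclePowerSum_inv (g : Perm ι) : cyclePowerSum σ g⁻¹ = cyclePowerSum σ g := by
  simp only [cyclePowerSum, comp_perm_inv_eq_iff]

theorem cyclePowerSum_conj (s g : Perm ι) :
    cyclePowerSum σ (s * g * s⁻¹) = cyclePowerSum σ g := by
  refine sum_equiv (s.symm.arrowCongr (Equiv.refl σ)) (fun v => ?_) fun v _ => ?_
  · simp only [mem_filter_univ, funext_iff]
    rw [← s.forall_congr_right]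
    simp
  · exact (Equiv.prod_comp s fun i => (X (v i) : MvPolynomial σ ℤ)).symm

theorem coeffAt_cyclePowerSum (μ : σ → ℕ) (g : Perm ι) :
    coeffAt μ (cyclePowerSum σ g) = #{v : ι → σ | v ∘ g = v ∧ content v = μ} := by
  simp only [cyclePowerSum, map_sum, prod_comp_eq_prod_pow_content, coeffAt_prod_X_pow]
  rw [← sum_filter, filter_filter]
  simp [eq_comm]

theorem rename_cyclePowerSum (e : Perm σ) (g : Perm ι) :
    rename e (cyclePowerSum σ g) = cyclePowerSum σ g := by
  rw [cyclePowerSum, map_sum]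
  refine sum_equiv ((Equiv.refl ι).arrowCongr e) (fun v => ?_) fun v _ => ?_
  · simp [funext_iff]
  · simp [map_prod]

variable (σ) in
/-- The generating series `∑ m, h_m t ^ m` of the complete homogeneous symmetric polynomials,
as a product of geometric series. -/
noncomputable def completeSymmSeries : PowerSeries (MvPolynomial σ ℤ) :=
  ∏ i : σ, PowerSeries.mk fun b => X i ^ b

variable (σ) in
/-- The complete homogeneous symmetric polynomial `h_m`. -/
noncomputable def completeSymm (m : ℕ) : MvPolynomial σ ℤ :=
  PowerSeries.coeff m (completeSymmSeries σ)

theorem completeSymm_eq_sum (m : ℕ) :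
    completeSymm σ m = ∑ κ ∈ piAntidiag univ m, ∏ i, X i ^ κ i := by
  simp only [completeSymm, completeSymmSeries, PowerSeries.coeff_prod, PowerSeries.coeff_mk]
  exact sum_equiv Finsupp.equivFunOnFinite (by simp [mem_finsuppAntidiag]) (by simp)

theorem coeffAt_smul_cyclePowerSum (μ : σ → ℕ) (g : Perm ι) :
    coeffAt μ (cyclePowerSum σ g) • cyclePowerSum σ g =
      ∑ w : ι → σ × σ with content (Prod.fst ∘ w) = μ,
        if w ∘ g = w then ∏ i, (X (w i).2 : MvPolynomial σ ℤ) else 0 := by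
  rw [← sum_filter, filter_filter, coeffAt_cyclePowerSum, cyclePowerSum, natCast_zsmul,
    ← sum_const, ← sum_product']
  refine (sum_equiv (arrowProdEquivProdArrow ι (fun _ => σ) fun _ => σ) (fun w => ?_)
    fun _ _ => rfl).symm
  simp only [mem_filter_univ, mem_product, funext_iff, Prod.ext_iff, forall_and]
  exact ⟨fun h => ⟨⟨h.2.1, h.1⟩, h.2.2⟩, fun h => ⟨h.1.2, h.1.1, h.2⟩⟩

/-- The Cauchy identity, one monomial at a time in the first set of variables. -/
theorem sum_coeffAt_smul_cyclePowerSum (μ : σ → ℕ) (hμ : ∑ a, μ a = Fintype.card ι) :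
    ∑ g : Perm ι, coeffAt μ (cyclePowerSum σ g) • cyclePowerSum σ g =
      (Fintype.card ι).factorial • ∏ a, completeSymm σ (μ a) := by
  simp only [coeffAt_smul_cyclePowerSum]
  rw [sum_comm]
  simp only [← sum_filter, sum_const, completeSymm_eq_sum]
  rw [prod_univ_sum, smul_sum, ← sum_fiberwise_of_maps_to
    (g := fun w : ι → σ × σ => Function.curry (content w))
    (t := Fintype.piFinset fun i => piAntidiag univ (μ i))]
  · refine sum_congr rfl fun κ hκ => ?_
    simp only [Fintype.mem_piFinset, mem_piAntidiag] at hκ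
    have hfiber (w : ι → σ × σ) : content (Prod.fst ∘ w) = μ ∧ Function.curry (content w) = κ ↔
        content w = Function.uncurry κ := by
      refine ⟨fun h => by rw [← h.2]; rfl, fun h => ⟨funext fun a => ?_, by rw [h]; rfl⟩⟩
      rw [← sum_content_prodMk, h, ← (hκ a).1]
      rfl
    have hκsum : ∑ x, Function.uncurry κ x = Fintype.card ι := by
      rw [← hμ, Fintype.sum_prod_type]
      exact sum_congr rfl fun a _ => (hκ a).1
    simp only [filter_filter, hfiber]
    rw [sum_card_stabilizer_smul_prod (fun x => X x.2) _ hκsum, Fintype.prod_prod_type]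
    rfl
  · intro w hw
    rw [Fintype.mem_piFinset]
    intro a
    rw [mem_piAntidiag, ← (mem_filter.1 hw).2, ← sum_content_prodMk]
    exact ⟨rfl, by simp⟩

end CyclePowerSum

/-! ### Alternants and the Jacobi–Trudi identity -/

section Alternant

variable {σ : Type*} [Fintype σ]

theorem coeffAt_prod_X_pow_mul {R : Type*} [CommSemiring R] (α κ : σ → ℕ) (f : MvPolynomial σ R) :
    coeffAt α ((∏ i, X i ^ κ i) * f) = if ∀ i, κ i ≤ α i then coeffAt (α - κ) f else 0 := by
  rw [← monomial_equivFunOnFinite_symm, coeffAt_apply, coeff_monomial_mul', one_mul]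
  refine if_congr Iff.rfl (congrArg (coeff · f) ?_) rfl
  ext i
  rfl

variable [DecidableEq σ]

/-- The alternant `a_β = det (X i ^ β j)`. -/
noncomputable def alternant (β : σ → ℕ) : MvPolynomial σ ℤ :=
  (Matrix.of fun i j => (X i : MvPolynomial σ ℤ) ^ β j).det

theorem alternant_eq_sum (β : σ → ℕ) :
    alternant β = ∑ w : Perm σ, (Perm.sign w : ℤ) • ∏ i, X i ^ β (w i) := by
  rw [alternant, ← Matrix.det_transpose, Matrix.det_apply]
  simp [Units.smul_def]

theorem coeffAt_alternant (β γ : σ → ℕ) :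
    coeffAt γ (alternant β) = ∑ w : Perm σ, if γ = β ∘ w then (Perm.sign w : ℤ) else 0 := by
  simp only [alternant_eq_sum, map_sum, map_zsmul, coeffAt_prod_X_pow]
  simp [Function.comp_def]

/-- Alternating polynomials: permuting the variables multiplies by the sign. -/
def IsAlternating (f : MvPolynomial σ ℤ) : Prop :=
  ∀ w : Perm σ, rename w f = (Perm.sign w : ℤ) • f

theorem isAlternating_alternant (β : σ → ℕ) : IsAlternating (alternant β) := by
  intro w
  rw [alternant, AlgHom.map_det, zsmul_eq_mul, ← Matrix.det_permute]
  congr 1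
  ext i j : 2
  simp

end Alternant

section JacobiTrudi

variable {N : ℕ}

variable (N) in
/-- The Vandermonde determinant, i.e. the alternant of the staircase exponent `(0, 1, …, N - 1)`. -/
noncomputable def vandermondePoly : MvPolynomial (Fin N) ℤ :=
  alternant fun j : Fin N => (j : ℕ)

theorem vandermondePoly_ne_zero : vandermondePoly N ≠ 0 :=
  Matrix.det_vandermonde_ne_zero_iff.2 (X_injective (σ := Fin N) (R := ℤ))

/-- The matrix whose determinant is the Schur polynomial `a_β / a_δ`, where `β` already contains
the staircase shift `δ = (0, 1, …, N - 1)`. -/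
noncomputable def jacobiTrudiMatrix (β : Fin N → ℕ) :
    Matrix (Fin N) (Fin N) (MvPolynomial (Fin N) ℤ) :=
  Matrix.of fun l j => if (l : ℕ) ≤ β j then completeSymm (Fin N) (β j - l) else 0

/-- The generating series of the signed elementary symmetric polynomials in all the variables
except `X i`. -/
noncomputable def omittedElementarySeries (i : Fin N) : PowerSeries (MvPolynomial (Fin N) ℤ) :=
  ∏ r ∈ univ.erase i, (1 - PowerSeries.C (X r) * PowerSeries.X)

theorem omittedElementarySeries_mul_completeSymmSeries (i : Fin N) :
    omittedElementarySeries i * completeSymmSeries (Fin N) = PowerSeries.mk fun b => X i ^ b := by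
  rw [omittedElementarySeries, completeSymmSeries, ← mul_prod_erase univ _ (mem_univ i),
    mul_left_comm, ← prod_mul_distrib, prod_eq_one, mul_one]
  intro r _
  ext b : 1
  rw [sub_mul, one_mul, map_sub, mul_assoc, PowerSeries.coeff_C_mul, PowerSeries.coeff_mk]
  cases b with
  | zero => simp
  | succ b =>
    rw [PowerSeries.coeff_succ_X_mul, PowerSeries.coeff_mk, PowerSeries.coeff_one]
    simp [pow_succ']

theorem coeff_omittedElementarySeries_eq_zero (i : Fin N) {l : ℕ} (hl : N ≤ l) :
    PowerSeries.coeff l (omittedElementarySeries i) = 0 := by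
  have hpoly : omittedElementarySeries i =
      ((∏ r ∈ univ.erase i, (1 - Polynomial.C (X r) * Polynomial.X) :
        Polynomial (MvPolynomial (Fin N) ℤ)) : PowerSeries _) := by
    rw [omittedElementarySeries, ← Polynomial.coeToPowerSeries.ringHom_apply, map_prod]
    simp
  rw [hpoly, Polynomial.coeff_coe]
  refine Polynomial.coeff_eq_zero_of_natDegree_lt ?_
  calc _ ≤ _ := Polynomial.natDegree_prod_le _ _
    _ ≤ #(univ.erase i) • 1 := sum_le_card_nsmul _ _ 1 fun r _ => by compute_degree
    _ < l := by
      rw [card_erase_of_mem (mem_univ i), card_fin, smul_eq_mul, mul_one]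
      have := i.2
      omega

variable (N) in
/-- The transition matrix from complete homogeneous polynomials to powers of the variables. -/
noncomputable def omittedElementaryMatrix : Matrix (Fin N) (Fin N) (MvPolynomial (Fin N) ℤ) :=
  Matrix.of fun i l => PowerSeries.coeff (l : ℕ) (omittedElementarySeries i)

theorem omittedElementaryMatrix_mul_jacobiTrudiMatrix (β : Fin N → ℕ) :
    omittedElementaryMatrix N * jacobiTrudiMatrix β =
      Matrix.of fun i j => (X i : MvPolynomial (Fin N) ℤ) ^ β j := by
  refine Matrix.ext fun i j => ?_
  have hcoeff := congrArg (PowerSeries.coeff (β j))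
    (omittedElementarySeries_mul_completeSymmSeries i)
  rw [PowerSeries.coeff_mk, PowerSeries.coeff_mul,
    Nat.sum_antidiagonal_eq_sum_range_succ_mk] at hcoeff
  simp only [Matrix.mul_apply, Matrix.of_apply, omittedElementaryMatrix, jacobiTrudiMatrix, mul_ite,
    mul_zero]
  rw [Fin.sum_univ_eq_sum_range (fun l => if l ≤ β j then
    PowerSeries.coeff l (omittedElementarySeries i) * completeSymm (Fin N) (β j - l) else 0),
    ← sum_filter, ← hcoeff]
  refine sum_subset (fun l => by simp) fun l hl hl' => ?_
  simp only [mem_range, mem_filter] at hl hl'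
  rw [coeff_omittedElementarySeries_eq_zero i (by omega), zero_mul]

theorem det_jacobiTrudiMatrix_staircase :
    (jacobiTrudiMatrix fun j : Fin N => (j : ℕ)).det = 1 := by
  rw [Matrix.det_of_isUpperTriangular]
  · exact prod_eq_one fun i _ => by
      simp [jacobiTrudiMatrix, completeSymm, completeSymmSeries, map_prod]
  · intro i j (hij : j < i)
    simp [jacobiTrudiMatrix, hij]

theorem vandermondePoly_mul_det_jacobiTrudiMatrix (β : Fin N → ℕ) :
    vandermondePoly N * (jacobiTrudiMatrix β).det = alternant β := by
  simp only [vandermondePoly, alternant, ← omittedElementaryMatrix_mul_jacobiTrudiMatrix,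
    Matrix.det_mul, det_jacobiTrudiMatrix_staircase, mul_one]

end JacobiTrudi

/-! ### Frobenius characters -/

section FrobeniusChar

variable {N : ℕ} {ι : Type*} [Fintype ι] [DecidableEq ι]

/-- The Frobenius character formula: `g ↦ [x ^ α] (a_δ · p_g)`. For a strictly monotone `α` of the
right degree this is the irreducible character of the partition `α - δ`, `δ = (0, 1, …, N - 1)`. -/
noncomputable def frobeniusChar (α : Fin N → ℕ) (g : Perm ι) : ℤ :=
  coeffAt α (vandermondePoly N * cyclePowerSum (Fin N) g)

theorem frobeniusChar_conj (α : Fin N → ℕ) (s g : Perm ι) :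
    frobeniusChar α (s * g * s⁻¹) = frobeniusChar α g := by
  rw [frobeniusChar, cyclePowerSum_conj, frobeniusChar]

theorem frobeniusChar_inv (α : Fin N → ℕ) (g : Perm ι) :
    frobeniusChar α g⁻¹ = frobeniusChar α g := by
  rw [frobeniusChar, cyclePowerSum_inv, frobeniusChar]

theorem frobeniusChar_eq_sum (α : Fin N → ℕ) (g : Perm ι) :
    frobeniusChar α g = ∑ w : Perm (Fin N), (Perm.sign w : ℤ) *
      if ∀ i, (w i : ℕ) ≤ α i then
        coeffAt (α - fun i => (w i : ℕ)) (cyclePowerSum (Fin N) g) else 0 := by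
  rw [frobeniusChar, vandermondePoly, alternant_eq_sum, sum_mul, map_sum]
  exact sum_congr rfl fun w _ => by
    rw [smul_mul_assoc, map_zsmul, coeffAt_prod_X_pow_mul, smul_eq_mul]; congr

theorem sum_frobeniusChar_smul_cyclePowerSum (β : Fin N → ℕ)
    (hβ : ∑ i, β i = Fintype.card ι + ∑ i : Fin N, (i : ℕ)) :
    ∑ g : Perm ι, frobeniusChar β g • cyclePowerSum (Fin N) g =
      (Fintype.card ι).factorial • (jacobiTrudiMatrix β).det := by
  simp only [frobeniusChar_eq_sum, sum_smul, mul_smul]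
  rw [sum_comm, Matrix.det_apply, smul_sum]
  refine sum_congr rfl fun w _ => ?_
  rw [← smul_sum]
  by_cases h : ∀ i, (w i : ℕ) ≤ β i
  · have hsum : ∑ i, (β - fun i => (w i : ℕ)) i = Fintype.card ι := by
      rw [Pi.sub_def, sum_tsub_distrib _ fun i _ => h i, hβ, Equiv.sum_comp w fun i => (i : ℕ),
        Nat.add_sub_cancel]
    simp only [if_pos h]
    rw [sum_coeffAt_smul_cyclePowerSum _ hsum, smul_comm, Units.smul_def]
    congr 2
    exact prod_congr rfl fun i _ => (if_pos (h i)).symm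
  · obtain ⟨i, hi⟩ := not_forall.mp h
    rw [prod_eq_zero (mem_univ i) (if_neg hi)]
    simp [if_neg h]

/-- Comparing coefficients in the Cauchy identity gives the orthogonality relations. -/
theorem sum_frobeniusChar_mul_frobeniusChar (β γ : Fin N → ℕ)
    (hβ : ∑ i, β i = Fintype.card ι + ∑ i : Fin N, (i : ℕ)) :
    ∑ g : Perm ι, frobeniusChar β g * frobeniusChar γ g =
      (Fintype.card ι).factorial * coeffAt γ (alternant β) := by
  have h := congrArg (fun f => coeffAt γ (vandermondePoly N * f))
    (sum_frobeniusChar_smul_cyclePowerSum (ι := ι) β hβ)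
  simp only [mul_sum, map_sum, mul_smul_comm, map_zsmul, map_nsmul, smul_eq_mul,
    vandermondePoly_mul_det_jacobiTrudiMatrix] at h
  rwa [nsmul_eq_mul] at h

end FrobeniusChar

section IsAlternating

variable {σ : Type*} [Fintype σ] [DecidableEq σ]

theorem IsAlternating.mul_of_rename_eq {f g : MvPolynomial σ ℤ} (hf : IsAlternating f)
    (hg : ∀ w : Perm σ, rename w g = g) : IsAlternating (f * g) := fun w => by
  rw [map_mul, hf w, hg w, smul_mul_assoc]

theorem IsAlternating.coeffAt_comp {f : MvPolynomial σ ℤ} (hf : IsAlternating f) (γ : σ → ℕ)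
    (w : Perm σ) : coeffAt (γ ∘ w) f = Perm.sign w * coeffAt γ f := by
  have hmap : Finsupp.mapDomain w (Finsupp.equivFunOnFinite.symm (γ ∘ w)) =
      Finsupp.equivFunOnFinite.symm γ := by
    ext i
    obtain ⟨j, rfl⟩ := w.surjective i
    simp [Finsupp.mapDomain_apply w.injective]
  rw [coeffAt_apply, ← coeff_rename_mapDomain w w.injective f, hmap, hf w, coeff_smul, smul_eq_mul,
    coeffAt_apply]

theorem IsAlternating.coeffAt_eq_zero_of_not_injective {f : MvPolynomial σ ℤ}
    (hf : IsAlternating f) {γ : σ → ℕ} (h : ¬ Function.Injective γ) : coeffAt γ f = 0 := by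
  obtain ⟨i, j, hij, hne⟩ : ∃ i j, γ i = γ j ∧ i ≠ j := by
    simpa [Function.Injective] using h
  have hswap : γ ∘ Equiv.swap i j = γ := by simp [Equiv.comp_swap_eq_update, hij]
  have hneg := hf.coeffAt_comp γ (Equiv.swap i j)
  rw [hswap, Perm.sign_swap hne] at hneg
  push_cast at hneg
  lia

end IsAlternating

section StrictExponents

variable {N : ℕ}

theorem isAlternating_vandermondePoly : IsAlternating (vandermondePoly N) :=
  isAlternating_alternant _

theorem eq_and_eq_one_of_strictMono_of_eq_comp {β γ : Fin N → ℕ} (hβ : StrictMono β)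
    (hγ : StrictMono γ) {w : Perm (Fin N)} (h : γ = β ∘ w) : β = γ ∧ w = 1 := by
  have hrange : Set.range γ = Set.range β := by
    rw [h, Set.range_comp, w.range_eq_univ, Set.image_univ]
  obtain rfl : γ = β := (hγ.range_inj hβ).1 hrange
  exact ⟨rfl, Equiv.ext fun i => (hβ.injective (congrFun h i)).symm⟩

theorem coeffAt_alternant_of_strictMono {β γ : Fin N → ℕ} (hβ : StrictMono β)
    (hγ : StrictMono γ) : coeffAt γ (alternant β) = if β = γ then 1 else 0 := by
  have hcomp (w : Perm (Fin N)) : γ = β ∘ w ↔ β = γ ∧ w = 1 :=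
    ⟨eq_and_eq_one_of_strictMono_of_eq_comp hβ hγ, fun h => by rw [h.2, h.1]; rfl⟩
  simp only [coeffAt_alternant, hcomp, ite_and]
  split_ifs <;> simp

theorem exists_eq_comp_of_coeffAt_alternant_ne_zero {σ : Type*} [Fintype σ] [DecidableEq σ]
    {β γ : σ → ℕ} (h : coeffAt γ (alternant β) ≠ 0) : ∃ w : Perm σ, γ = β ∘ w := by
  rw [coeffAt_alternant] at h
  obtain ⟨w, -, hw⟩ := exists_ne_zero_of_sum_ne_zero h
  exact ⟨w, by_contra fun hne => hw (if_neg hne)⟩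

theorem coeffAt_alternant_eq_zero_or {β : Fin N → ℕ} (hβ : StrictMono β) (γ : Fin N → ℕ) :
    coeffAt γ (alternant β) = 0 ∨ coeffAt γ (alternant β) = 1 ∨
      coeffAt γ (alternant β) = -1 := by
  refine or_iff_not_imp_left.2 fun h => ?_
  obtain ⟨w, rfl⟩ := exists_eq_comp_of_coeffAt_alternant_ne_zero h
  rw [(isAlternating_alternant β).coeffAt_comp, coeffAt_alternant_of_strictMono hβ hβ, if_pos rfl,
    mul_one]
  rcases Int.units_eq_one_or (Perm.sign w) with h | h <;> simp [h]

open Classical in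
/-- The strictly increasing exponents `λ + δ`, `δ = (0, 1, …, N - 1)`, of degree `m + |δ|`; they
encode the partitions `λ` of `m` into at most `N` parts. -/
noncomputable def strictExponents (N m : ℕ) : Finset (Fin N → ℕ) :=
  (piAntidiag univ (m + ∑ i : Fin N, (i : ℕ))).filter StrictMono

theorem mem_strictExponents {m : ℕ} {β : Fin N → ℕ} :
    β ∈ strictExponents N m ↔ ∑ i, β i = m + ∑ i : Fin N, (i : ℕ) ∧ StrictMono β := by
  simp [strictExponents]

theorem exists_comp_perm_mem_strictExponents {m : ℕ} {γ : Fin N → ℕ} (hγ : Function.Injective γ)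
    (hsum : ∑ i, γ i = m + ∑ i : Fin N, (i : ℕ)) :
    ∃ δ ∈ strictExponents N m, ∃ w : Perm (Fin N), γ = δ ∘ w := by
  have hstrict : StrictMono (γ ∘ Tuple.sort γ) :=
    (Tuple.monotone_sort γ).strictMono_of_injective (hγ.comp (Tuple.sort γ).injective)
  refine ⟨γ ∘ Tuple.sort γ, mem_strictExponents.2 ⟨?_, hstrict⟩, (Tuple.sort γ)⁻¹, ?_⟩
  · rw [← hsum]
    exact Equiv.sum_comp (Tuple.sort γ) γ
  · ext i
    simp

theorem IsAlternating.coeffAt_eq_sum_strictExponents {f : MvPolynomial (Fin N) ℤ}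
    (hf : IsAlternating f) {m : ℕ} {γ : Fin N → ℕ}
    (hsum : ∑ i, γ i = m + ∑ i : Fin N, (i : ℕ)) :
    coeffAt γ f = ∑ β ∈ strictExponents N m, coeffAt γ (alternant β) * coeffAt β f := by
  by_cases hγ : Function.Injective γ
  · obtain ⟨δ, hδ, w, rfl⟩ := exists_comp_perm_mem_strictExponents hγ hsum
    have hcoeff : ∀ β ∈ strictExponents N m,
        coeffAt (δ ∘ w) (alternant β) * coeffAt β f =
          if β = δ then Perm.sign w * coeffAt δ f else 0 := fun β hβ => by
      rw [(isAlternating_alternant β).coeffAt_comp, coeffAt_alternant_of_strictMono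
        (mem_strictExponents.1 hβ).2 (mem_strictExponents.1 hδ).2]
      split_ifs with h <;> simp [h]
    rw [hf.coeffAt_comp, sum_congr rfl hcoeff, sum_ite_eq', if_pos hδ]
  · simp [hf.coeffAt_eq_zero_of_not_injective hγ,
      (isAlternating_alternant _).coeffAt_eq_zero_of_not_injective hγ]

end StrictExponents

section FrobeniusChar

variable {N : ℕ} {ι : Type*} [Fintype ι] [DecidableEq ι]

theorem isAlternating_vandermondePoly_mul_cyclePowerSum (g : Perm ι) :
    IsAlternating (vandermondePoly N * cyclePowerSum (Fin N) g) :=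
  isAlternating_vandermondePoly.mul_of_rename_eq fun w => rename_cyclePowerSum w g

theorem frobeniusChar_eq_sum_strictExponents {γ : Fin N → ℕ}
    (hγ : ∑ i, γ i = Fintype.card ι + ∑ i : Fin N, (i : ℕ)) (g : Perm ι) :
    frobeniusChar γ g =
      ∑ β ∈ strictExponents N (Fintype.card ι), coeffAt γ (alternant β) * frobeniusChar β g :=
  (isAlternating_vandermondePoly_mul_cyclePowerSum g).coeffAt_eq_sum_strictExponents hγ

theorem frobeniusChar_eq_zero_of_sum_ne {γ : Fin N → ℕ}
    (hγ : ∑ i, γ i ≠ Fintype.card ι + ∑ i : Fin N, (i : ℕ)) (g : Perm ι) :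
    frobeniusChar γ g = 0 := by
  rw [frobeniusChar_eq_sum]
  refine sum_eq_zero fun w _ => mul_eq_zero_of_right _ (ite_eq_right_iff.2 fun hw => ?_)
  rw [coeffAt_cyclePowerSum, Nat.cast_eq_zero, card_eq_zero, filter_eq_empty_iff]
  rintro v - ⟨-, hv⟩
  refine hγ ?_
  rw [← sum_content v, hv, Pi.sub_def, sum_tsub_distrib _ fun i _ => hw i,
    Equiv.sum_comp w fun i => (i : ℕ), tsub_add_cancel_of_le]
  rw [← Equiv.sum_comp w fun i => (i : ℕ)]
  exact sum_le_sum fun i _ => hw i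

theorem sum_frobeniusChar_mul_frobeniusChar_of_mem {β γ : Fin N → ℕ}
    (hβ : β ∈ strictExponents N (Fintype.card ι)) (hγ : γ ∈ strictExponents N (Fintype.card ι)) :
    ∑ g : Perm ι, frobeniusChar β g * frobeniusChar γ g =
      (Fintype.card ι).factorial * if β = γ then 1 else 0 := by
  rw [sum_frobeniusChar_mul_frobeniusChar β γ (mem_strictExponents.1 hβ).1,
    coeffAt_alternant_of_strictMono (mem_strictExponents.1 hβ).2 (mem_strictExponents.1 hγ).2]

end FrobeniusChar

section CycleRemoval

variable {ι : Type*}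

theorem comp_subtypeCongr_eq_iff {A : Type*} {p : ι → Prop} [DecidablePred p]
    (c : Perm {x // p x}) (h : Perm {x // ¬ p x}) (v : ι → A) :
    v ∘ c.subtypeCongr h = v ↔
      (fun x : {x // p x} => v x) ∘ c = (fun x : {x // p x} => v x) ∧
        (fun x : {x // ¬ p x} => v x) ∘ h = fun x : {x // ¬ p x} => v x := by
  simp only [funext_iff, Function.comp_apply]
  constructor
  · exact fun hv => ⟨fun x => by simpa using hv x, fun x => by simpa using hv x⟩
  · rintro ⟨hc, hh⟩ x
    by_cases hx : p x
    · simpa [Perm.subtypeCongr.left_apply _ _ hx] using hc ⟨x, hx⟩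
    · simpa [Perm.subtypeCongr.right_apply _ _ hx] using hh ⟨x, hx⟩

variable [Fintype ι] [DecidableEq ι] {σ : Type*} [Fintype σ] [DecidableEq σ]

theorem cyclePowerSum_subtypeCongr (p : ι → Prop) [DecidablePred p] (c : Perm {x // p x})
    (h : Perm {x // ¬ p x}) :
    cyclePowerSum σ (c.subtypeCongr h) = cyclePowerSum σ c * cyclePowerSum σ h := by
  simp only [cyclePowerSum]
  rw [sum_mul_sum, ← sum_product']
  refine sum_equiv (piEquivPiSubtypeProd p fun _ => σ) (fun v => ?_) fun v _ => ?_
  · simp only [mem_filter_univ, mem_product, comp_subtypeCongr_eq_iff]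
    rfl
  · exact (Fintype.prod_subtype_mul_prod_subtype p fun i => (X (v i) : MvPolynomial σ ℤ)).symm

theorem cyclePowerSum_of_sameCycle [Nonempty ι] {c : Perm ι} (hc : ∀ x y, c.SameCycle x y) :
    cyclePowerSum σ c = ∑ i, X i ^ Fintype.card ι := by
  refine (sum_bij (fun i _ => fun _ => i) (fun i _ => ?_) (fun i _ j _ h => ?_)
    (fun v hv => ?_) fun i _ => by simp).symm
  · rw [mem_filter_univ]
    rfl
  · exact congrFun h (Classical.arbitrary ι)
  · rw [mem_filter_univ] at hv
    exact ⟨v (Classical.arbitrary ι), mem_univ _, funext fun y => apply_eq_of_sameCycle hv (hc _ y)⟩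

theorem coeffAt_X_pow_mul {R : Type*} [CommSemiring R] (α : σ → ℕ) (i : σ) (k : ℕ)
    (f : MvPolynomial σ R) :
    coeffAt α (X i ^ k * f) = if k ≤ α i then coeffAt (α - Pi.single i k) f else 0 := by
  have hX : (X i : MvPolynomial σ R) ^ k = ∏ j, X j ^ (Pi.single i k : σ → ℕ) j := by
    rw [prod_eq_single i (fun j _ hj => by simp [hj]) (by simp), Pi.single_eq_same]
  rw [hX, coeffAt_prod_X_pow_mul]
  refine if_congr ⟨fun h => by simpa using h i, fun h j => ?_⟩ rfl rfl
  obtain rfl | hj := eq_or_ne j i <;> simp [*]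

theorem frobeniusChar_subtypeCongr {N : ℕ} (α : Fin N → ℕ) (p : ι → Prop) [DecidablePred p]
    [Nonempty {x // p x}] {c : Perm {x // p x}} (hc : ∀ x y, c.SameCycle x y)
    (h : Perm {x // ¬ p x}) :
    frobeniusChar α (c.subtypeCongr h) =
      ∑ i, if Fintype.card {x // p x} ≤ α i then
        frobeniusChar (α - Pi.single i (Fintype.card {x // p x})) h else 0 := by
  rw [frobeniusChar, cyclePowerSum_subtypeCongr, cyclePowerSum_of_sameCycle hc, mul_left_comm,
    sum_mul, map_sum]
  exact sum_congr rfl fun i _ => coeffAt_X_pow_mul α i _ _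

end CycleRemoval

section SameCycle

variable {ι : Type*}

theorem apply_eq_self_iff_forall_sameCycle (g : Perm ι) (x : ι) :
    g x = x ↔ ∀ y, g.SameCycle x y → x = y :=
  ⟨fun hx _ hy => hy.eq_of_left hx, fun h => (h _ (Perm.sameCycle_apply_right.2 (.refl _ _))).symm⟩

variable [Fintype ι]

theorem exists_word_eq_iff_sameCycle {N : ℕ} (hN : Fintype.card ι ≤ N) (g : Perm ι) :
    ∃ v : ι → Fin N, ∀ x y, v x = v y ↔ g.SameCycle x y := by
  classical
  let S := Perm.SameCycle.setoid g
  have hcard : Fintype.card (Quotient S) ≤ Fintype.card (Fin N) := by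
    rw [Fintype.card_fin]
    exact (Fintype.card_quotient_le S).trans hN
  obtain ⟨e⟩ := Function.Embedding.nonempty_of_card_le hcard
  exact ⟨fun x => e (Quotient.mk S x), fun x y => e.injective.eq_iff.trans Quotient.eq⟩

variable [DecidableEq ι]

theorem injOn_support_cycleFactorsFinset (g : Perm ι) :
    Set.InjOn Perm.support (g.cycleFactorsFinset : Set (Perm ι)) := by
  intro a ha b hb hab
  by_contra hne
  have hdisj := (g.cycleFactorsFinset_pairwise_disjoint ha hb hne).disjoint_support
  rw [hab, disjoint_self] at hdisj
  exact (Perm.mem_cycleFactorsFinset_iff.1 hb).1.ne_one (Perm.support_eq_empty_iff.1 hdisj)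

open Classical in
theorem filter_sameCycle_eq_support_cycleOf {g : Perm ι} {x : ι} (hx : x ∈ g.support) :
    ({y | g.SameCycle x y} : Finset ι) = (g.cycleOf x).support := by
  ext y
  rw [mem_filter_univ, Perm.mem_support_cycleOf_iff' (Perm.mem_support.1 hx)]

open Classical in
theorem image_support_cycleFactorsFinset (g : Perm ι) :
    g.cycleFactorsFinset.image Perm.support =
      (g.support.image fun x => ({y | g.SameCycle x y} : Finset ι)) := by
  ext s
  simp only [mem_image]
  constructor
  · rintro ⟨c, hc, rfl⟩
    obtain ⟨x, hx⟩ := (Perm.mem_cycleFactorsFinset_iff.1 hc).1.nonempty_support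
    have hxg := Perm.mem_cycleFactorsFinset_support_le hc hx
    exact ⟨x, hxg, by rw [filter_sameCycle_eq_support_cycleOf hxg, Perm.cycle_is_cycleOf hx hc]⟩
  · rintro ⟨x, hx, rfl⟩
    exact ⟨g.cycleOf x, Perm.cycleOf_mem_cycleFactorsFinset_iff.2 hx,
      (filter_sameCycle_eq_support_cycleOf hx).symm⟩

theorem cycleType_eq_of_sameCycle_iff {g h : Perm ι}
    (H : ∀ x y, g.SameCycle x y ↔ h.SameCycle x y) : g.cycleType = h.cycleType := by
  classical
  have hcard (k : Perm ι) :
      k.cycleType = (k.cycleFactorsFinset.image Perm.support).val.map card := by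
    rw [Perm.cycleType_def, image_val_of_injOn (injOn_support_cycleFactorsFinset k),
      Multiset.map_map]
  have hsupp : g.support = h.support := by
    ext x
    simp only [Perm.mem_support, ne_eq, apply_eq_self_iff_forall_sameCycle, H]
  simp only [hcard, image_support_cycleFactorsFinset, hsupp, H]

end SameCycle

section Completeness

variable {N : ℕ} {ι : Type*} [Fintype ι] [DecidableEq ι] {F : Perm ι → ℂ}

/-- The hypothesis says `a_δ · ∑ g, F g • p_g = 0`, and `a_δ` is not a zero divisor. -/
theorem sum_mul_coeffAt_cyclePowerSum_eq_zero
    (h : ∀ α : Fin N → ℕ, ∑ g, F g * (frobeniusChar α g : ℂ) = 0) (κ : Fin N → ℕ) :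
    ∑ g, F g * ((coeffAt κ (cyclePowerSum (Fin N) g) : ℤ) : ℂ) = 0 := by
  let toComplex := map (σ := Fin N) (Int.castRingHom ℂ)
  have hcoeff (p : Perm ι → MvPolynomial (Fin N) ℤ) (α : Fin N → ℕ) :
      coeffAt α (∑ g, F g • toComplex (p g)) = ∑ g, F g * ((coeffAt α (p g) : ℤ) : ℂ) := by
    simp [coeffAt_apply, toComplex, coeff_map]
  have hmul :
      toComplex (vandermondePoly N) * ∑ g, F g • toComplex (cyclePowerSum (Fin N) g) = 0 := by
    refine eq_of_coeffAt_eq fun α => ?_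
    simp only [mul_sum, mul_smul_comm, ← map_mul]
    rw [hcoeff, map_zero]
    exact h α
  have hne : toComplex (vandermondePoly N) ≠ 0 :=
    (map_ne_zero_iff _ (map_injective _ (RingHom.injective_int _))).2 vandermondePoly_ne_zero
  rw [← hcoeff, (mul_eq_zero.1 hmul).resolve_left hne, map_zero]

theorem sum_stabilizer_comp_perm {A : Type*} [DecidableEq A]
    (hF : ∀ s g, F (s * g * s⁻¹) = F g) (v : ι → A) (s : Perm ι) :
    ∑ g ∈ {g : Perm ι | (v ∘ s) ∘ g = v ∘ s}, F g = ∑ g ∈ {g : Perm ι | v ∘ g = v}, F g := by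
  refine sum_equiv (MulAut.conj s).toEquiv (fun g => ?_) fun g _ => (hF s g).symm
  rw [mem_filter_univ, mem_filter_univ, MulEquiv.toEquiv_eq_coe, MulEquiv.coe_toEquiv,
    MulAut.conj_apply, ← s.surjective.injective_comp_right.eq_iff (a := v ∘ ⇑(s * g * s⁻¹))]
  have hcomp : (v ∘ ⇑(s * g * s⁻¹)) ∘ s = (v ∘ s) ∘ g := by ext; simp
  rw [hcomp]

theorem sum_stabilizer_eq_zero (hF : ∀ s g, F (s * g * s⁻¹) = F g)
    (h : ∀ α : Fin N → ℕ, ∑ g, F g * (frobeniusChar α g : ℂ) = 0) (v : ι → Fin N) :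
    ∑ g ∈ {g : Perm ι | v ∘ g = v}, F g = 0 := by
  have htotal : ∑ u : ι → Fin N with content u = content v,
      ∑ g ∈ {g : Perm ι | u ∘ g = u}, F g = 0 := by
    rw [← sum_mul_coeffAt_cyclePowerSum_eq_zero h (content v),
      sum_congr rfl fun u _ => sum_filter _ F, sum_comm]
    refine sum_congr rfl fun g _ => ?_
    rw [coeffAt_cyclePowerSum, ← sum_filter, filter_filter, sum_const, nsmul_eq_mul, mul_comm]
    simp only [and_comm, Int.cast_natCast]
  have hconst (u : ι → Fin N) (hu : u ∈ ({u | content u = content v} : Finset (ι → Fin N))) :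
      ∑ g ∈ {g : Perm ι | u ∘ g = u}, F g = ∑ g ∈ {g : Perm ι | v ∘ g = v}, F g := by
    obtain ⟨s, rfl⟩ := exists_perm_comp_eq_of_content_eq (mem_filter.1 hu).2
    exact sum_stabilizer_comp_perm hF v s
  rw [sum_congr rfl hconst, sum_const, smul_eq_zero, card_eq_zero] at htotal
  exact htotal.resolve_left (ne_empty_of_mem (a := v) (by simp))

/-- Induction on the number of pairs in a common cycle: a permutation that fixes a word constant
exactly on the cycles of `g` has the cycles of `g` or strictly finer ones. -/
theorem eq_zero_of_forall_sum_mul_frobeniusChar_eq_zero (hN : Fintype.card ι ≤ N)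
    (hF : ∀ s g, F (s * g * s⁻¹) = F g)
    (h : ∀ α : Fin N → ℕ, ∑ g, F g * (frobeniusChar α g : ℂ) = 0) (g : Perm ι) : F g = 0 := by
  classical
  induction hm : #{x : ι × ι | g.SameCycle x.1 x.2} using Nat.strong_induction_on
    generalizing g with
  | _ m ih =>
  obtain ⟨v, hv⟩ := exists_word_eq_iff_sameCycle hN g
  have hvalue (k : Perm ι) (hk : k ∈ ({k | v ∘ k = v} : Finset (Perm ι))) :
      F k = if ∀ x y, k.SameCycle x y ↔ g.SameCycle x y then F g else 0 := by
    rw [mem_filter_univ] at hk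
    split_ifs with hsame
    · obtain ⟨s, rfl⟩ :=
        isConj_iff.1 (Perm.isConj_iff_cycleType_eq.2 (cycleType_eq_of_sameCycle_iff hsame))
      rw [hF]
    · have hfiner x y (hxy : k.SameCycle x y) : g.SameCycle x y :=
        (hv x y).1 (apply_eq_of_sameCycle hk hxy)
      refine ih _ ?_ k rfl
      rw [← hm]
      refine card_lt_card (Finset.ssubset_iff_subset_ne.2
        ⟨fun x hx => ?_, fun heq => hsame fun x y => ?_⟩)
      · exact (mem_filter_univ x).2 (hfiner _ _ ((mem_filter_univ x).1 hx))
      · simpa using Finset.ext_iff.1 heq (x, y)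
  have hsum := sum_stabilizer_eq_zero hF h v
  rw [sum_congr rfl hvalue, ← sum_filter, sum_const, smul_eq_zero, card_eq_zero] at hsum
  refine hsum.resolve_left (ne_empty_of_mem (a := g) ?_)
  rw [mem_filter, mem_filter_univ]
  exact ⟨funext fun x => (hv _ _).2 (Perm.sameCycle_apply_left.2 (.refl _ _)), fun _ _ => Iff.rfl⟩

end Completeness

section DegreePositivity

theorem sum_sub_single {σ : Type*} [Fintype σ] [DecidableEq σ] {α : σ → ℕ} {i : σ} {k : ℕ}
    (hi : k ≤ α i) : ∑ j, (α - Pi.single i k : σ → ℕ) j + k = ∑ j, α j := by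
  have hle (j : σ) : (Pi.single i k : σ → ℕ) j ≤ α j := by
    obtain rfl | hj := eq_or_ne j i <;> simp [*]
  calc ∑ j, (α - Pi.single i k : σ → ℕ) j + k
      = ∑ j, ((α - Pi.single i k : σ → ℕ) j + (Pi.single i k : σ → ℕ) j) := by
        simp [sum_add_distrib]
    _ = ∑ j, α j := sum_congr rfl fun j _ => tsub_add_cancel_of_le (hle j)

theorem monotone_sub_single_one {σ : Type*} [PartialOrder σ] [DecidableEq σ] {α : σ → ℕ}
    (hα : StrictMono α) (i : σ) : Monotone (α - Pi.single i 1) := by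
  intro a b hab
  obtain rfl | hlt := hab.eq_or_lt
  · rfl
  have hle : (Pi.single i 1 : σ → ℕ) b ≤ 1 := by
    obtain rfl | hb := eq_or_ne b i <;> simp [*]
  have hαlt := hα hlt
  simp only [Pi.sub_apply]
  lia

variable {N : ℕ}

theorem val_le_apply_of_strictMono {α : Fin N → ℕ} (hα : StrictMono α) (i : Fin N) :
    (i : ℕ) ≤ α i := by
  simpa using card_le_card_of_injOn (s := Iio i) (t := range (α i)) α
    (fun j hj => by simpa using hα (mem_Iio.1 hj)) hα.injective.injOn

theorem exists_strictMono_sub_single_one {α : Fin N → ℕ} (hα : StrictMono α)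
    (hex : ∃ i : Fin N, (i : ℕ) < α i) : ∃ i, 1 ≤ α i ∧ StrictMono (α - Pi.single i 1) := by
  obtain ⟨i, hi⟩ := exists_minimal (s := ({i | (i : ℕ) < α i} : Finset (Fin N)))
    (hex.imp fun i hi => (mem_filter_univ i).2 hi)
  have hiα : (i : ℕ) < α i := (mem_filter_univ i).1 hi.1
  refine ⟨i, by lia, fun a b hab => ?_⟩
  have hαlt := hα hab
  obtain rfl | hb := eq_or_ne b i
  · have ha : α a ≤ a := not_lt.1 fun h => hab.not_ge (hi.2 ((mem_filter_univ a).2 h) hab.le)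
    have : (a : ℕ) < b := hab
    simp only [Pi.sub_apply, Pi.single_eq_same, Pi.single_eq_of_ne hab.ne]
    lia
  · simp only [Pi.sub_apply, Pi.single_eq_of_ne hb]
    lia

/-- The coefficient of `x ^ α` in `a_δ · (x₁ + ⋯ + x_N) ^ n`, which for a strictly monotone `α`
counts the standard Young tableaux of shape `α - δ`. -/
noncomputable def standardTableauCount (n : ℕ) (α : Fin N → ℕ) : ℤ :=
  coeffAt α (vandermondePoly N * (∑ i, X i) ^ n)

theorem frobeniusChar_one {ι : Type*} [Fintype ι] [DecidableEq ι] (α : Fin N → ℕ) :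
    frobeniusChar α (1 : Perm ι) = standardTableauCount (Fintype.card ι) α := by
  have hprod := prod_univ_sum (ι := ι) (fun _ => (univ : Finset (Fin N)))
    fun _ j => (X j : MvPolynomial (Fin N) ℤ)
  rw [prod_const, card_univ, Fintype.piFinset_univ] at hprod
  rw [frobeniusChar, standardTableauCount, hprod, cyclePowerSum]
  simp

theorem standardTableauCount_zero {α : Fin N → ℕ} (hα : StrictMono α) :
    standardTableauCount 0 α = if (fun j : Fin N => (j : ℕ)) = α then 1 else 0 := by
  rw [standardTableauCount, pow_zero, mul_one, vandermondePoly,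
    coeffAt_alternant_of_strictMono Fin.val_strictMono hα]

theorem standardTableauCount_succ (n : ℕ) (α : Fin N → ℕ) :
    standardTableauCount (n + 1) α =
      ∑ i, if 1 ≤ α i then standardTableauCount n (α - Pi.single i 1) else 0 := by
  simp only [standardTableauCount, ← coeffAt_X_pow_mul, pow_one]
  rw [pow_succ', mul_left_comm, sum_mul, map_sum]

theorem standardTableauCount_eq_zero_of_not_injective (n : ℕ) {α : Fin N → ℕ}
    (hα : ¬ Function.Injective α) : standardTableauCount n α = 0 := by
  refine (isAlternating_vandermondePoly.mul_of_rename_eq fun w => ?_)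
    |>.coeffAt_eq_zero_of_not_injective hα
  simp only [map_pow, map_sum, rename_X, Equiv.sum_comp w fun i => (X i : MvPolynomial (Fin N) ℤ)]

theorem standardTableauCount_nonneg (n : ℕ) {α : Fin N → ℕ} (hα : Monotone α) :
    0 ≤ standardTableauCount n α := by
  by_cases hinj : Function.Injective α
  · have hstrict := hα.strictMono_of_injective hinj
    induction n generalizing α with
    | zero =>
      rw [standardTableauCount_zero hstrict]
      split_ifs <;> simp
    | succ n ih =>
      rw [standardTableauCount_succ]
      refine sum_nonneg fun i _ => ?_
      split_ifs
      · have hmono := monotone_sub_single_one hstrict i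
        by_cases hinj' : Function.Injective (α - Pi.single i 1)
        · exact ih hmono hinj' (hmono.strictMono_of_injective hinj')
        · exact (standardTableauCount_eq_zero_of_not_injective n hinj').ge
      · rfl
  · exact (standardTableauCount_eq_zero_of_not_injective n hinj).ge

theorem standardTableauCount_pos {n : ℕ} {α : Fin N → ℕ} (hα : α ∈ strictExponents N n) :
    0 < standardTableauCount n α := by
  induction n generalizing α with
  | zero =>
    obtain ⟨hsum, hstrict⟩ := mem_strictExponents.1 hα
    rw [standardTableauCount_zero hstrict, if_pos]
    · exact one_pos
    · rw [zero_add] at hsum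
      exact funext fun i => (sum_eq_sum_iff_of_le
        fun i _ => val_le_apply_of_strictMono hstrict i).1 hsum.symm i (mem_univ i)
  | succ n ih =>
    obtain ⟨hsum, hstrict⟩ := mem_strictExponents.1 hα
    have hex : ∃ i : Fin N, (i : ℕ) < α i := by
      by_contra! hle
      have := sum_le_sum fun i (_ : i ∈ univ) => hle i
      lia
    obtain ⟨i, hi, hsub⟩ := exists_strictMono_sub_single_one hstrict hex
    rw [standardTableauCount_succ]
    refine sum_pos' (fun j _ => ?_) ⟨i, mem_univ i, ?_⟩
    · split_ifs
      · exact standardTableauCount_nonneg n (monotone_sub_single_one hstrict j)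
      · rfl
    · rw [if_pos hi]
      refine ih (mem_strictExponents.2 ⟨?_, hsub⟩)
      have := sum_sub_single hi
      lia

theorem frobeniusChar_one_pos {ι : Type*} [Fintype ι] [DecidableEq ι] {β : Fin N → ℕ}
    (hβ : β ∈ strictExponents N (Fintype.card ι)) : 0 < frobeniusChar β (1 : Perm ι) := by
  rw [frobeniusChar_one]
  exact standardTableauCount_pos hβ

end DegreePositivity

section Murnaghan

variable {N : ℕ}

/-- The Murnaghan–Nakayama coefficient of the shape `β - δ` in the restriction of the character of
shape `α - δ` along the removal of a `k`-cycle: the signed number of ways to move one entry of `α`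
down by `k` so as to obtain a rearrangement of `β`. -/
noncomputable def cycleRemovalCoeff (k : ℕ) (α β : Fin N → ℕ) : ℤ :=
  ∑ i, if k ≤ α i then coeffAt (α - Pi.single i k) (alternant β) else 0

theorem frobeniusChar_subtypeCongr_eq_sum {ι : Type*} [Fintype ι] [DecidableEq ι]
    (p : ι → Prop) [DecidablePred p] [Nonempty {x // p x}] {c : Perm {x // p x}}
    (hc : ∀ x y, c.SameCycle x y) (h : Perm {x // ¬ p x}) {α : Fin N → ℕ}
    (hα : α ∈ strictExponents N (Fintype.card ι)) :
    frobeniusChar α (c.subtypeCongr h) =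
      ∑ β ∈ strictExponents N (Fintype.card {x // ¬ p x}),
        cycleRemovalCoeff (Fintype.card {x // p x}) α β * frobeniusChar β h := by
  simp only [frobeniusChar_subtypeCongr α p hc h, cycleRemovalCoeff, sum_mul]
  rw [sum_comm]
  refine sum_congr rfl fun i _ => ?_
  split_ifs with hi
  · refine frobeniusChar_eq_sum_strictExponents ?_ h
    have hsum := (mem_strictExponents.1 hα).1
    have hcard := Fintype.card_subtype_compl p
    have hle := Fintype.card_subtype_le p
    have := sum_sub_single hi
    lia
  · simp

/-- `∑ i, t ^ α i`, which determines `α` up to rearrangement. -/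
noncomputable def exponentPoly (α : Fin N → ℕ) : Polynomial ℤ := ∑ i, Polynomial.X ^ α i

theorem exponentPoly_comp_perm (α : Fin N → ℕ) (w : Perm (Fin N)) :
    exponentPoly (α ∘ w) = exponentPoly α :=
  Equiv.sum_comp w fun i => Polynomial.X ^ α i

theorem coeff_exponentPoly (α : Fin N → ℕ) (x : ℕ) : (exponentPoly α).coeff x = content α x := by
  simp [exponentPoly, content, Polynomial.coeff_X_pow, eq_comm]

theorem eq_of_exponentPoly_eq {α β : Fin N → ℕ} (hα : StrictMono α) (hβ : StrictMono β)
    (h : exponentPoly α = exponentPoly β) : α = β := by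
  have hcontent : content α = content β := by
    ext x
    exact_mod_cast (coeff_exponentPoly α x).symm.trans (h ▸ coeff_exponentPoly β x)
  obtain ⟨w, hw⟩ := exists_perm_comp_eq_of_content_eq hcontent
  exact (eq_and_eq_one_of_strictMono_of_eq_comp hβ hα hw.symm).1.symm

theorem exponentPoly_sub_single {k : ℕ} {α : Fin N → ℕ} {i : Fin N} (hi : k ≤ α i) :
    exponentPoly (α - Pi.single i k) + Polynomial.X ^ (α i - k) * (Polynomial.X ^ k - 1) =
      exponentPoly α := by
  have hrest :
      ∑ j ∈ univ.erase i, (Polynomial.X : Polynomial ℤ) ^ (α - Pi.single i k : Fin N → ℕ) j =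
      ∑ j ∈ univ.erase i, Polynomial.X ^ α j :=
    sum_congr rfl fun j hj => by simp [ne_of_mem_erase hj]
  rw [exponentPoly, exponentPoly, ← add_sum_erase _ _ (mem_univ i), hrest,
    ← add_sum_erase _ (fun j => Polynomial.X ^ α j) (mem_univ i), mul_sub_one, ← pow_add,
    Nat.sub_add_cancel hi, Pi.sub_apply, Pi.single_eq_same]
  ring

theorem exponentPoly_eq_of_coeffAt_alternant_ne_zero {k : ℕ} {α β : Fin N → ℕ} {i : Fin N}
    (hi : k ≤ α i) (h : coeffAt (α - Pi.single i k) (alternant β) ≠ 0) :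
    exponentPoly α = exponentPoly β + Polynomial.X ^ (α i - k) * (Polynomial.X ^ k - 1) := by
  obtain ⟨w, hw⟩ := exists_eq_comp_of_coeffAt_alternant_ne_zero h
  rw [← exponentPoly_sub_single hi, hw, exponentPoly_comp_perm]

theorem exponentPoly_eq_of_cycleRemovalCoeff_ne_zero {k : ℕ} {α β : Fin N → ℕ}
    (h : cycleRemovalCoeff k α β ≠ 0) :
    ∃ m, exponentPoly α = exponentPoly β + Polynomial.X ^ m * (Polynomial.X ^ k - 1) := by
  obtain ⟨i, -, hi⟩ := exists_ne_zero_of_sum_ne_zero h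
  obtain ⟨hk, hne⟩ := ite_ne_right_iff.1 hi
  exact ⟨_, exponentPoly_eq_of_coeffAt_alternant_ne_zero hk hne⟩

theorem X_pow_sub_one_ne_zero {k : ℕ} (hk : 0 < k) : (Polynomial.X ^ k - 1 : Polynomial ℤ) ≠ 0 :=
  Polynomial.X_pow_sub_C_ne_zero hk 1

theorem cycleRemovalCoeff_eq_zero_or {k : ℕ} (hk : 0 < k) {α β : Fin N → ℕ} (hα : StrictMono α)
    (hβ : StrictMono β) :
    cycleRemovalCoeff k α β = 0 ∨ cycleRemovalCoeff k α β = 1 ∨ cycleRemovalCoeff k α β = -1 := by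
  refine or_iff_not_imp_left.2 fun h => ?_
  obtain ⟨i, -, hi⟩ := exists_ne_zero_of_sum_ne_zero h
  obtain ⟨hik, hine⟩ := ite_ne_right_iff.1 hi
  rw [cycleRemovalCoeff, sum_eq_single i _ (by simp), if_pos hik]
  · exact (coeffAt_alternant_eq_zero_or hβ _).resolve_left hine
  · refine fun j _ hj => ite_eq_right_iff.2 fun hjk => ?_
    by_contra hjne
    have hpow := (exponentPoly_eq_of_coeffAt_alternant_ne_zero hik hine).symm.trans
      (exponentPoly_eq_of_coeffAt_alternant_ne_zero hjk hjne)
    have hdegree := congrArg Polynomial.natDegree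
      (mul_right_cancel₀ (X_pow_sub_one_ne_zero hk) (add_left_cancel hpow))
    rw [Polynomial.natDegree_X_pow, Polynomial.natDegree_X_pow] at hdegree
    exact hj (hα.injective (by lia))

theorem eq_of_cycleRemovalCoeff_ne_zero {k : ℕ} (hk : 0 < k) {α α' β β' : Fin N → ℕ}
    (hα : StrictMono α) (hα' : StrictMono α') (hβ : StrictMono β) (hβ' : StrictMono β')
    (hne : α ≠ α') (hαβ : cycleRemovalCoeff k α β ≠ 0) (hα'β : cycleRemovalCoeff k α' β ≠ 0)
    (hαβ' : cycleRemovalCoeff k α β' ≠ 0) (hα'β' : cycleRemovalCoeff k α' β' ≠ 0) : β = β' := by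
  obtain ⟨a, ha⟩ := exponentPoly_eq_of_cycleRemovalCoeff_ne_zero hαβ
  obtain ⟨a', ha'⟩ := exponentPoly_eq_of_cycleRemovalCoeff_ne_zero hα'β
  obtain ⟨b, hb⟩ := exponentPoly_eq_of_cycleRemovalCoeff_ne_zero hαβ'
  obtain ⟨b', hb'⟩ := exponentPoly_eq_of_cycleRemovalCoeff_ne_zero hα'β'
  have haa' : a ≠ a' := by
    rintro rfl
    exact hne (eq_of_exponentPoly_eq hα hα' (ha.trans ha'.symm))
  have hpow : (Polynomial.X ^ a - Polynomial.X ^ a' : Polynomial ℤ) =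
      Polynomial.X ^ b - Polynomial.X ^ b' := by
    refine mul_right_cancel₀ (X_pow_sub_one_ne_zero hk) ?_
    linear_combination hb - hb' - ha + ha'
  have hab : a = b := by
    have hcoeff := congrArg (Polynomial.coeff · a) hpow
    simp only [Polynomial.coeff_sub, Polynomial.coeff_X_pow, if_true, if_neg haa'] at hcoeff
    by_contra hab
    rw [if_neg hab] at hcoeff
    split_ifs at hcoeff <;> simp at hcoeff
  subst hab
  exact eq_of_exponentPoly_eq hβ hβ' (add_right_cancel (ha.symm.trans hb))

end Murnaghan

/-! ### Complex characters of finite groups -/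

section Characters

variable {G W W' : Type*} [Group G] [Fintype G] [AddCommGroup W] [Module ℂ W]
  [FiniteDimensional ℂ W] [AddCommGroup W'] [Module ℂ W'] [FiniteDimensional ℂ W']

theorem exists_sum_character_eq (ρ : Representation ℂ G W) :
    ∃ m : ℕ, ∑ g, ρ.character g = Nat.card G * m := by
  have hcard : (Nat.card G : ℂ) ≠ 0 := by simp
  have := invertibleOfNonzero hcard
  refine ⟨Module.finrank ℂ ρ.invariants, ?_⟩
  rw [← ρ.card_inv_mul_sum_char_eq_finrank, mul_inv_cancel_left₀ hcard]

theorem exists_sum_character_mul_eq (ρ : Representation ℂ G W) (π : Representation ℂ G W') :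
    ∃ m : ℕ, ∑ g, ρ.character g * π.character g = Nat.card G * m := by
  simpa using exists_sum_character_eq (ρ.tprod π)

theorem exists_sum_character_inv_mul_eq (ρ : Representation ℂ G W) (π : Representation ℂ G W') :
    ∃ m : ℕ, ∑ g, ρ.character g⁻¹ * π.character g = Nat.card G * m := by
  simpa using exists_sum_character_eq (ρ.linHom π)

/-- The permutation representation on the functions `X → ℂ` attached to an action of `G` on `X`. -/
noncomputable def permRep {G X : Type*} [Group G] (φ : G →* Perm X) :
    Representation ℂ G (X → ℂ) where
  toFun g := LinearMap.funLeft ℂ ℂ (φ g⁻¹)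
  map_one' := by ext; simp [LinearMap.funLeft]
  map_mul' a b := by ext; simp [LinearMap.funLeft]

theorem character_permRep {G X : Type*} [Group G] [Fintype X] [DecidableEq X] (φ : G →* Perm X)
    (g : G) : (permRep φ).character g = #{x | φ g x = x} := by
  rw [Representation.character, LinearMap.trace_eq_matrix_trace ℂ (Pi.basisFun ℂ X)]
  simp [Matrix.trace, permRep, LinearMap.funLeft, Pi.single_apply, Equiv.symm_apply_eq,
    eq_comm (a := φ g _)]

theorem exists_sum_card_fixed_mul_character_eq {X : Type*} [Fintype X] [DecidableEq X]
    (φ : G →* Perm X) (ρ : Representation ℂ G W) :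
    ∃ m : ℕ, ∑ g, (#{x | φ g x = x} : ℂ) * ρ.character g = Nat.card G * m := by
  simpa only [character_permRep] using exists_sum_character_mul_eq (permRep φ) ρ

theorem exists_sum_mul_character_eq_of_isIdempotentElem {G J : Type*} [Group G] [Fintype J]
    {a : J → ℂ} {y : J → G} (he : IsIdempotentElem (∑ j, a j • MonoidAlgebra.of ℂ G (y j)))
    (ρ : Representation ℂ G W) : ∃ m : ℕ, ∑ j, a j * ρ.character (y j) = m := by
  refine ⟨_, .trans ?_ (LinearMap.IsIdempotentElem.isProj_range _
    (he.map (MonoidAlgebra.lift ℂ (Module.End ℂ W) G ρ))).trace⟩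
  simp [Representation.character]

end Characters

section RootsOfUnity

variable {W : Type*} [AddCommGroup W] [Module ℂ W]

/-- The representation `ρ` tensored with the linear character `l`. -/
def twist {G : Type*} [Group G] (ρ : Representation ℂ G W) (l : G →* ℂ) :
    Representation ℂ G W where
  toFun g := l g • ρ g
  map_one' := by simp
  map_mul' a b := by rw [map_mul, map_mul, smul_mul_smul_comm]

theorem character_twist {G : Type*} [Group G] (ρ : Representation ℂ G W) (l : G →* ℂ) (g : G) :
    (twist ρ l).character g = l g * ρ.character g := by
  simp [twist, Representation.character]

variable [FiniteDimensional ℂ W] {A : Type*} [AddCommGroup A]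

theorem exists_sum_addChar_neg_mul_character_eq [Fintype A]
    (ρ : Representation ℂ (Multiplicative A) W) (ψ : AddChar A ℂ) :
    ∃ m : ℕ, ∑ a : A, ψ (-a) * ρ.character (.ofAdd a) = Fintype.card A * m := by
  obtain ⟨m, hm⟩ := exists_sum_character_eq (twist ρ ψ⁻¹.toMonoidHom)
  refine ⟨m, ?_⟩
  rw [← Nat.card_eq_fintype_card, ← Nat.card_congr Multiplicative.toAdd, ← hm,
    ← Equiv.sum_comp Multiplicative.ofAdd]
  simp [character_twist, AddChar.inv_apply]

theorem exists_character_eq_sum_addChar [Finite A] (ρ : Representation ℂ (Multiplicative A) W) :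
    ∃ m : AddChar A ℂ → ℕ, ∀ a : A, ρ.character (.ofAdd a) = ∑ ψ, (m ψ : ℂ) * ψ a := by
  classical
  cases nonempty_fintype A
  choose m hm using exists_sum_addChar_neg_mul_character_eq ρ
  refine ⟨m, fun a => mul_left_cancel₀ (Nat.cast_ne_zero.2 (Fintype.card_ne_zero (α := A))) ?_⟩
  have horthogonal (b : A) : ∑ ψ : AddChar A ℂ, ψ (-b) * ρ.character (.ofAdd b) * ψ a =
      if b = a then Fintype.card A * ρ.character (.ofAdd a) else 0 := by
    calc ∑ ψ : AddChar A ℂ, ψ (-b) * ρ.character (.ofAdd b) * ψ a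
        = (∑ ψ : AddChar A ℂ, ψ (-b + a)) * ρ.character (.ofAdd b) := by
          rw [sum_mul]
          exact sum_congr rfl fun ψ _ => by rw [AddChar.map_add_eq_mul]; ring
      _ = _ := by
          rw [AddChar.sum_apply_eq_ite]
          obtain rfl | hba := eq_or_ne b a
          · simp
          · simp [hba, neg_add_eq_zero]
  calc (Fintype.card A : ℂ) * ρ.character (.ofAdd a)
      = ∑ b : A, ∑ ψ : AddChar A ℂ, ψ (-b) * ρ.character (.ofAdd b) * ψ a := by
        simp only [horthogonal, sum_ite_eq', mem_univ, if_true]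
    _ = Fintype.card A * ∑ ψ, (m ψ : ℂ) * ψ a := by
        simp only [sum_comm (s := univ (α := A)), mul_sum, ← mul_assoc, ← hm, sum_mul]

theorem isIntegral_addChar_apply [Finite A] (ψ : AddChar A ℂ) (a : A) : IsIntegral ℤ (ψ a) := by
  refine IsIntegral.of_pow (n := Nat.card A) Nat.card_pos ?_
  rw [← AddChar.map_nsmul_eq_pow, card_nsmul_eq_zero', AddChar.map_zero_eq_one]
  exact isIntegral_one

variable {G : Type*} [Group G] [Finite G] (ρ : Representation ℂ G W) (g : G)

open scoped IsMulCommutative in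
theorem exists_character_eq_sum_addChar_zpowers :
    ∃ m : AddChar (Additive (Subgroup.zpowers g)) ℂ → ℕ, ∀ z : Subgroup.zpowers g,
      ρ.character z = ∑ ψ, (m ψ : ℂ) * ψ (.ofMul z) := by
  obtain ⟨m, hm⟩ := exists_character_eq_sum_addChar (A := Additive (Subgroup.zpowers g))
    (ρ.comp ((Subgroup.zpowers g).subtype.comp (MulEquiv.multiplicativeAdditive _).toMonoidHom))
  exact ⟨m, fun z => hm (.ofMul z)⟩

open scoped IsMulCommutative in
theorem isIntegral_character : IsIntegral ℤ (ρ.character g) := by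
  obtain ⟨m, hm⟩ := exists_character_eq_sum_addChar_zpowers ρ g
  rw [hm ⟨g, Subgroup.mem_zpowers g⟩]
  exact .sum _ fun ψ _ => (isIntegral_algebraMap (x := (m ψ : ℤ))).mul
    (isIntegral_addChar_apply ψ _)

open scoped IsMulCommutative in
theorem character_inv_eq_conj : ρ.character g⁻¹ = starRingEnd ℂ (ρ.character g) := by
  obtain ⟨m, hm⟩ := exists_character_eq_sum_addChar_zpowers ρ g
  have hinv := hm ⟨g, Subgroup.mem_zpowers g⟩⁻¹
  rw [InvMemClass.coe_inv] at hinv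
  rw [hinv, hm ⟨g, Subgroup.mem_zpowers g⟩, map_sum]
  simp [AddChar.map_neg_eq_conj]

end RootsOfUnity

section CentralCharacters

variable {G W : Type*} [Group G] [Fintype G] [AddCommGroup W] [Module ℂ W] [FiniteDimensional ℂ W]
  {ρ : Representation ℂ G W}

theorem finrank_invariants_linHom_self
    (hρ : ∑ g, ρ.character g * ρ.character g⁻¹ = Nat.card G) :
    Module.finrank ℂ (ρ.linHom ρ).invariants = 1 := by
  have hcard : (Nat.card G : ℂ) ≠ 0 := by simp
  have := invertibleOfNonzero hcard
  have hrank := (ρ.linHom ρ).card_inv_mul_sum_char_eq_finrank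
  simp_rw [Representation.char_linHom, mul_comm (ρ.character _⁻¹), hρ] at hrank
  rw [inv_mul_cancel₀ hcard] at hrank
  exact_mod_cast hrank.symm

theorem exists_eq_smul_one_of_mem_invariants
    (hρ : ∑ g, ρ.character g * ρ.character g⁻¹ = Nat.card G) {z : Module.End ℂ W}
    (hz : z ∈ (ρ.linHom ρ).invariants) : ∃ ω : ℂ, z = ω • 1 := by
  have hone : (1 : Module.End ℂ W) ∈ (ρ.linHom ρ).invariants := fun g => by ext; simp
  have hrank := finrank_invariants_linHom_self hρ
  obtain h | h := eq_or_ne (⟨1, hone⟩ : (ρ.linHom ρ).invariants) 0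
  · have hzero : (1 : Module.End ℂ W) = 0 := congrArg Subtype.val h
    have := subsingleton_of_zero_eq_one hzero.symm
    exact ⟨0, Subsingleton.elim _ _⟩
  · obtain ⟨ω, hω⟩ := exists_smul_eq_of_finrank_eq_one hrank h ⟨z, hz⟩
    exact ⟨ω, (congrArg Subtype.val hω).symm⟩

theorem sum_smul_mem_invariants_linHom {G W : Type*} [Group G] [Fintype G] [AddCommGroup W]
    [Module ℂ W] (ρ : Representation ℂ G W) {a : G → ℤ} (ha : ∀ s g, a (s * g * s⁻¹) = a g) :
    ∑ g, a g • ρ g ∈ (ρ.linHom ρ).invariants := by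
  intro s
  change ρ s * ((∑ g, a g • ρ g) * ρ s⁻¹) = ∑ g, a g • ρ g
  conv_rhs => rw [← Equiv.sum_comp (MulAut.conj s).toEquiv]
  rw [sum_mul, mul_sum]
  refine sum_congr rfl fun g _ => ?_
  simp [ha, mul_assoc (ρ s), -zsmul_eq_mul]

theorem isIntegral_sum_smul {R : Type*} [Ring R] {G : Type*} [Group G] [Fintype G] (ρ : G →* R)
    (a : G → ℤ) : IsIntegral ℤ (∑ g, a g • ρ g) := by
  have hsum : ∑ g, a g • ρ g = MonoidAlgebra.lift ℤ R G ρ (∑ g, a g • MonoidAlgebra.of ℤ G g) := by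
    simp only [map_sum, map_smul, MonoidAlgebra.lift_of]
  rw [hsum]
  exact (Algebra.IsIntegral.isIntegral _).map _

theorem exists_isIntegral_sum_mul_character_eq
    (hρ : ∑ g, ρ.character g * ρ.character g⁻¹ = Nat.card G) {a : G → ℤ}
    (ha : ∀ s g, a (s * g * s⁻¹) = a g) :
    ∃ ω : ℂ, IsIntegral ℤ ω ∧ ∑ g, (a g : ℂ) * ρ.character g = ρ.character 1 * ω := by
  obtain hW | hW := subsingleton_or_nontrivial W
  · exact ⟨0, isIntegral_zero, by simp [Representation.character, Subsingleton.elim (ρ _) 0]⟩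
  obtain ⟨ω, hω⟩ := exists_eq_smul_one_of_mem_invariants hρ (sum_smul_mem_invariants_linHom ρ ha)
  refine ⟨ω, ?_, ?_⟩
  · rw [← isIntegral_algebraMap_iff (algebraMap ℂ (Module.End ℂ W)).injective,
      Algebra.algebraMap_eq_smul_one, ← hω]
    exact isIntegral_sum_smul ρ a
  · have htrace := congrArg (LinearMap.trace ℂ W) hω
    simpa [← Int.cast_smul_eq_zsmul ℂ, Representation.character, mul_comm] using htrace

theorem dvd_of_isIntegral_mul_eq {a b : ℤ} (ha : a ≠ 0) {ω : ℂ} (hω : IsIntegral ℤ ω)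
    (h : (a : ℂ) * ω = b) : a ∣ b := by
  have hrat : ω = algebraMap ℚ ℂ (b / a) := by
    rw [eq_ratCast, Rat.cast_div, Rat.cast_intCast, Rat.cast_intCast,
      eq_div_iff (Int.cast_ne_zero.2 ha), mul_comm, h]
  rw [hrat, isIntegral_algebraMap_iff (algebraMap ℚ ℂ).injective] at hω
  obtain ⟨c, hc⟩ := IsIntegrallyClosed.isIntegral_iff.1 hω
  refine ⟨c, ?_⟩
  rw [eq_intCast, eq_div_iff (Int.cast_ne_zero.2 ha), mul_comm] at hc
  exact_mod_cast hc.symm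

theorem finrank_ne_zero_of_sum_character_eq
    (hρ : ∑ g, ρ.character g * ρ.character g⁻¹ = Nat.card G) : Module.finrank ℂ W ≠ 0 := by
  intro hzero
  have : Subsingleton W := Module.finrank_zero_iff.1 hzero
  have hcard : (0 : ℂ) = Nat.card G := by
    simpa [Representation.character, Subsingleton.elim (ρ _) 0] using hρ
  exact Nat.cast_ne_zero.2 Nat.card_pos.ne' hcard.symm

theorem exists_isIntegral_sum_character_mul_inv_eq
    (hρ : ∑ g, ρ.character g * ρ.character g⁻¹ = Nat.card G) :
    ∃ ω : ℂ, IsIntegral ℤ ω ∧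
      ∑ g, ρ.character g * ρ.character g⁻¹ = Module.finrank ℂ W * ω := by
  classical
  have hclass (C : ConjClasses G) : ∃ ω : ℂ, IsIntegral ℤ ω ∧
      ∑ g with ConjClasses.mk g = C, ρ.character g = Module.finrank ℂ W * ω := by
    obtain ⟨ω, hω, hsum⟩ := exists_isIntegral_sum_mul_character_eq hρ
      (a := fun g => if ConjClasses.mk g = C then 1 else 0) fun s g => by
        rw [ConjClasses.mk_eq_mk_iff_isConj.2 (isConj_iff.2 ⟨s, rfl⟩).symm]
    refine ⟨ω, hω, ?_⟩
    rw [← ρ.char_one, ← hsum, sum_filter]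
    simp
  choose ω hω hsum using hclass
  refine ⟨∑ C, ω C * ρ.character C.out⁻¹,
    .sum _ fun C _ => (hω C).mul (isIntegral_character ρ _), ?_⟩
  rw [← sum_fiberwise univ ConjClasses.mk, mul_sum]
  refine sum_congr rfl fun C _ => ?_
  rw [← mul_assoc, ← hsum, sum_mul]
  refine sum_congr rfl fun g hg => ?_
  obtain ⟨s, hs⟩ := isConj_iff.1 (ConjClasses.mk_eq_mk_iff_isConj.1
    (((mem_filter_univ g).1 hg).trans (Quotient.out_eq C).symm))
  rw [← ρ.char_conj g⁻¹ s, ← conj_inv, hs]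

theorem finrank_dvd_natCard (hρ : ∑ g, ρ.character g * ρ.character g⁻¹ = Nat.card G) :
    Module.finrank ℂ W ∣ Nat.card G := by
  obtain ⟨ω, hω, hsum⟩ := exists_isIntegral_sum_character_mul_inv_eq hρ
  exact Int.natCast_dvd_natCast.1 <| dvd_of_isIntegral_mul_eq
    (Int.natCast_ne_zero.2 (finrank_ne_zero_of_sum_character_eq hρ)) hω
    (by exact_mod_cast hsum.symm.trans hρ)

end CentralCharacters

section ClassSums

variable {G : Type*} [Group G] [Fintype G]

/-- The pairings of `Θ` with integral class functions are algebraic integers times `d`. For an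
irreducible character of degree `d` this is the integrality of central characters. -/
def HasIntegralClassSums (Θ : G → ℂ) (d : ℕ) : Prop :=
  ∀ a : G → ℤ, (∀ s g, a (s * g * s⁻¹) = a g) →
    ∃ ω : ℂ, IsIntegral ℤ ω ∧ ∑ g, (a g : ℂ) * Θ g = d * ω

theorem HasIntegralClassSums.exists_index_mul_sum_eq {Θ : G → ℂ} {d : ℕ}
    (hΘ : HasIntegralClassSums Θ d) (hconj : ∀ s g, Θ (s * g * s⁻¹) = Θ g) (H : Subgroup G)
    {z : G → ℤ} (hz : ∀ s ∈ H, ∀ g, z (s⁻¹ * g * s) = z g) :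
    ∃ ω : ℂ, IsIntegral ℤ ω ∧ H.index * ∑ g, (z g : ℂ) * Θ g = d * ω := by
  classical
  have hcoset (g x y : G) (hxy : QuotientGroup.leftRel H x y) :
      z (x⁻¹ * g * x) = z (y⁻¹ * g * y) := by
    rw [← hz _ (QuotientGroup.leftRel_apply.1 hxy) (x⁻¹ * g * x)]
    congr 1
    group
  let zCoset (g : G) : G ⧸ H → ℤ := Quotient.lift (fun t => z (t⁻¹ * g * t)) (hcoset g)
  obtain ⟨ω, hω, hsum⟩ := hΘ (fun g => ∑ q, zCoset g q) fun s g => by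
    rw [← Equiv.sum_comp (MulAction.toPerm s)]
    refine sum_congr rfl fun q _ => q.inductionOn fun t => congrArg z ?_
    simp [mul_assoc]
  refine ⟨ω, hω, hsum ▸ ?_⟩
  have hsame (q : G ⧸ H) : ∑ g, (zCoset g q : ℂ) * Θ g = ∑ g, (z g : ℂ) * Θ g :=
    q.inductionOn fun t => by
      rw [← Equiv.sum_comp (MulAut.conj t).toEquiv (fun g => (zCoset g _ : ℂ) * Θ g)]
      refine sum_congr rfl fun g _ => ?_
      simp [zCoset, hconj, ← mul_assoc]
  simp only [Int.cast_sum, sum_mul]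
  rw [sum_comm, sum_congr rfl fun q _ => hsame q, sum_const, card_univ, nsmul_eq_mul,
    H.index_eq_card, Nat.card_eq_fintype_card]

end ClassSums

/-! ### Induced and difference characters -/

section InducedCharacter

variable {ι W : Type*} [Fintype ι] [DecidableEq ι] [AddCommGroup W] [Module ℂ W]

/-- The character of a representation of the alternating group, extended by zero to the symmetric
group. -/
noncomputable def charExtend (ρ : Representation ℂ (alternatingGroup ι) W) : Perm ι → ℂ :=
  Function.extend Subtype.val ρ.character 0

theorem charExtend_coe (ρ : Representation ℂ (alternatingGroup ι) W) (g : alternatingGroup ι) :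
    charExtend ρ g = ρ.character g :=
  Subtype.val_injective.extend_apply _ _ g

theorem charExtend_of_notMem (ρ : Representation ℂ (alternatingGroup ι) W) {g : Perm ι}
    (hg : g ∉ alternatingGroup ι) : charExtend ρ g = 0 :=
  Function.extend_apply' _ _ _ fun ⟨a, ha⟩ => hg (ha ▸ a.2)

theorem sum_mul_charExtend (ρ : Representation ℂ (alternatingGroup ι) W) (f : Perm ι → ℂ) :
    ∑ g, f g * charExtend ρ g = ∑ g : alternatingGroup ι, f g * ρ.character g := by
  simp_rw [← charExtend_coe ρ]
  refine (sum_of_injOn Subtype.val Subtype.val_injective.injOn (by simp) (fun g _ hg => ?_)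
    fun _ _ => rfl).symm
  rw [charExtend_of_notMem ρ fun h => hg ⟨⟨g, h⟩, by simp⟩, mul_zero]

theorem charExtend_conj (ρ : Representation ℂ (alternatingGroup ι) W) {s : Perm ι}
    (hs : s ∈ alternatingGroup ι) (g : Perm ι) :
    charExtend ρ (s * g * s⁻¹) = charExtend ρ g := by
  by_cases hg : g ∈ alternatingGroup ι
  · have hconj := ρ.char_conj ⟨g, hg⟩ ⟨s, hs⟩
    rwa [← charExtend_coe, ← charExtend_coe] at hconj
  · rw [charExtend_of_notMem ρ hg, charExtend_of_notMem]
    simpa [mul_right_comm _ (Perm.sign g)] using hg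

/-- The representation `ρ` precomposed with conjugation by `τ`. -/
noncomputable def conjRep (τ : Perm ι) (ρ : Representation ℂ (alternatingGroup ι) W) :
    Representation ℂ (alternatingGroup ι) W :=
  ρ.comp (MulAut.conjNormal τ).toMonoidHom

theorem charExtend_conjRep (τ : Perm ι) (ρ : Representation ℂ (alternatingGroup ι) W)
    (g : Perm ι) : charExtend (conjRep τ ρ) g = charExtend ρ (τ * g * τ⁻¹) := by
  by_cases hg : g ∈ alternatingGroup ι
  · have h := charExtend_coe ρ (MulAut.conjNormal τ ⟨g, hg⟩)
    rw [MulAut.conjNormal_apply] at h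
    exact (charExtend_coe (conjRep τ ρ) ⟨g, hg⟩).trans h.symm
  · rw [charExtend_of_notMem _ hg, charExtend_of_notMem]
    simpa [mul_right_comm _ (Perm.sign g)] using hg

/-- The character `χ + χ^τ` of the symmetric group induced by the character `χ` of `ρ`, computed
with an odd permutation `τ`. -/
noncomputable def inducedChar (τ : Perm ι) (ρ : Representation ℂ (alternatingGroup ι) W)
    (g : Perm ι) : ℂ :=
  charExtend ρ g + charExtend ρ (τ * g * τ⁻¹)

/-- The difference `χ - χ^τ` of the two conjugates of the character `χ` of `ρ`, where `τ` is an odd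
permutation. -/
noncomputable def differenceChar (τ : Perm ι) (ρ : Representation ℂ (alternatingGroup ι) W)
    (g : Perm ι) : ℂ :=
  charExtend ρ g - charExtend ρ (τ * g * τ⁻¹)

theorem charExtend_conj_of_sign_eq_neg_one {τ s : Perm ι} (hτ : Perm.sign τ = -1)
    (hs : Perm.sign s = -1) (ρ : Representation ℂ (alternatingGroup ι) W) (g : Perm ι) :
    charExtend ρ (s * g * s⁻¹) = charExtend ρ (τ * g * τ⁻¹) := by
  rw [← charExtend_conj ρ (s := s * τ⁻¹) (by simp [hs, hτ]) (τ * g * τ⁻¹)]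
  congr 1
  group

theorem charExtend_conj_conj (τ : Perm ι) {s : Perm ι} (hs : Perm.sign s = 1)
    (ρ : Representation ℂ (alternatingGroup ι) W) (g : Perm ι) :
    charExtend ρ (τ * (s * g * s⁻¹) * τ⁻¹) = charExtend ρ (τ * g * τ⁻¹) := by
  rw [← charExtend_conjRep, charExtend_conj _ (by simpa using hs), charExtend_conjRep]

theorem charExtend_conj_conj_of_sign_eq_neg_one {τ s : Perm ι} (hτ : Perm.sign τ = -1)
    (hs : Perm.sign s = -1) (ρ : Representation ℂ (alternatingGroup ι) W) (g : Perm ι) :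
    charExtend ρ (τ * (s * g * s⁻¹) * τ⁻¹) = charExtend ρ g := by
  rw [← charExtend_conj ρ (s := τ * s) (by simp [hs, hτ]) g, mul_inv_rev]
  simp only [mul_assoc]

theorem inducedChar_conj {τ : Perm ι} (hτ : Perm.sign τ = -1)
    (ρ : Representation ℂ (alternatingGroup ι) W) (s g : Perm ι) :
    inducedChar τ ρ (s * g * s⁻¹) = inducedChar τ ρ g := by
  obtain hs | hs := Int.units_eq_one_or (Perm.sign s)
  · rw [inducedChar, inducedChar, charExtend_conj ρ (by simpa using hs),
      charExtend_conj_conj τ hs]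
  · rw [inducedChar, inducedChar, charExtend_conj_of_sign_eq_neg_one hτ hs,
      charExtend_conj_conj_of_sign_eq_neg_one hτ hs, add_comm]

theorem differenceChar_conj {τ : Perm ι} (hτ : Perm.sign τ = -1)
    (ρ : Representation ℂ (alternatingGroup ι) W) (s g : Perm ι) :
    differenceChar τ ρ (s * g * s⁻¹) = Perm.sign s * differenceChar τ ρ g := by
  obtain hs | hs := Int.units_eq_one_or (Perm.sign s)
  · rw [differenceChar, differenceChar, charExtend_conj ρ (by simpa using hs),
      charExtend_conj_conj τ hs, hs]
    simp
  · rw [differenceChar, differenceChar, charExtend_conj_of_sign_eq_neg_one hτ hs,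
      charExtend_conj_conj_of_sign_eq_neg_one hτ hs, hs]
    simp

theorem sum_mul_inducedChar (τ : Perm ι) (ρ : Representation ℂ (alternatingGroup ι) W)
    {f : Perm ι → ℂ} (hf : ∀ s g, f (s * g * s⁻¹) = f g) :
    ∑ g, f g * inducedChar τ ρ g = 2 * ∑ g : alternatingGroup ι, f g * ρ.character g := by
  have hconj : ∑ g, f g * charExtend ρ (τ * g * τ⁻¹) = ∑ g, f g * charExtend ρ g := by
    rw [← Equiv.sum_comp (MulAut.conj τ).toEquiv (fun g => f g * charExtend ρ g)]
    exact sum_congr rfl fun g _ => by simp [hf]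
  simp only [inducedChar, mul_add, sum_add_distrib]
  rw [hconj, sum_mul_charExtend, two_mul]

theorem two_mul_card_alternatingGroup_eq_factorial (ι : Type*) [Fintype ι] [DecidableEq ι]
    [Nontrivial ι] : 2 * Nat.card (alternatingGroup ι) = (Fintype.card ι).factorial := by
  rw [two_mul_nat_card_alternatingGroup, Nat.card_perm, Nat.card_eq_fintype_card]

theorem sum_charExtend_inv_mul_charExtend (ρ π : Representation ℂ (alternatingGroup ι) W) :
    ∑ g, charExtend ρ g⁻¹ * charExtend π g
      = ∑ g : alternatingGroup ι, ρ.character g⁻¹ * π.character g := by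
  rw [sum_mul_charExtend π fun g => charExtend ρ g⁻¹]
  simp_rw [← charExtend_coe ρ, InvMemClass.coe_inv]

variable [FiniteDimensional ℂ W] {ρ : Representation ℂ (alternatingGroup ι) W}

theorem charExtend_inv (ρ : Representation ℂ (alternatingGroup ι) W) (g : Perm ι) :
    charExtend ρ g⁻¹ = starRingEnd ℂ (charExtend ρ g) := by
  by_cases hg : g ∈ alternatingGroup ι
  · have hinv := character_inv_eq_conj ρ ⟨g, hg⟩
    rwa [← charExtend_coe, ← charExtend_coe] at hinv
  · rw [charExtend_of_notMem ρ hg, charExtend_of_notMem, map_zero]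
    simpa using hg

theorem hasIntegralClassSums_inducedChar (τ : Perm ι)
    (hρ : ∑ g, ρ.character g * ρ.character g⁻¹ = Nat.card (alternatingGroup ι)) :
    HasIntegralClassSums (inducedChar τ ρ) (2 * Module.finrank ℂ W) := by
  intro a ha
  obtain ⟨ω, hω, hsum⟩ := exists_isIntegral_sum_mul_character_eq hρ
    (a := fun g : alternatingGroup ι => a g) fun s g => by simp [ha]
  refine ⟨ω, hω, ?_⟩
  rw [sum_mul_inducedChar τ ρ (f := fun g => (a g : ℂ)) fun s g => by rw [ha], hsum, ρ.char_one]
  push_cast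
  ring

/-- The symmetric group permuting the letters of the words of content `μ`. -/
def wordPerm {σ : Type*} [DecidableEq σ] (μ : σ → ℕ) :
    Perm ι →* Perm {v : ι → σ // content v = μ} where
  toFun g :=
    { toFun v := ⟨v.1 ∘ ⇑g⁻¹, by rw [content_comp_perm, v.2]⟩
      invFun v := ⟨v.1 ∘ g, by rw [content_comp_perm, v.2]⟩
      left_inv v := by ext; simp
      right_inv v := by ext; simp }
  map_one' := by ext; simp
  map_mul' _ _ := by ext; simp

theorem card_fixed_wordPerm {σ : Type*} [Fintype σ] [DecidableEq σ] (μ : σ → ℕ) (g : Perm ι) :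
    (#{v | wordPerm μ g v = v} : ℤ) = coeffAt μ (cyclePowerSum σ g) := by
  rw [coeffAt_cyclePowerSum, ← card_map (Function.Embedding.subtype _)]
  congr 2
  ext v
  simp [wordPerm, ← comp_perm_inv_eq_iff g, and_comm, Subtype.ext_iff]

theorem exists_sum_coeffAt_cyclePowerSum_mul_character_eq {σ : Type*} [Fintype σ] [DecidableEq σ]
    (ρ : Representation ℂ (alternatingGroup ι) W) (μ : σ → ℕ) :
    ∃ m : ℕ, ∑ g : alternatingGroup ι,
      ((coeffAt μ (cyclePowerSum σ (g : Perm ι)) : ℤ) : ℂ) * ρ.character g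
        = Nat.card (alternatingGroup ι) * m := by
  obtain ⟨m, hm⟩ := exists_sum_card_fixed_mul_character_eq
    ((wordPerm (ι := ι) μ).comp (alternatingGroup ι).subtype) ρ
  refine ⟨m, hm ▸ sum_congr rfl fun g _ => ?_⟩
  rw [← card_fixed_wordPerm, Int.cast_natCast]
  congr!

theorem exists_sum_frobeniusChar_mul_inducedChar_eq [Nontrivial ι] {N : ℕ} (τ : Perm ι)
    (ρ : Representation ℂ (alternatingGroup ι) W) (α : Fin N → ℕ) :
    ∃ m : ℤ, ∑ g, (frobeniusChar α g : ℂ) * inducedChar τ ρ g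
      = (Fintype.card ι).factorial * m := by
  choose m hm using exists_sum_coeffAt_cyclePowerSum_mul_character_eq (σ := Fin N) ρ
  refine ⟨∑ w : Perm (Fin N), Perm.sign w *
    if ∀ i, (w i : ℕ) ≤ α i then (m (α - fun i => (w i : ℕ)) : ℤ) else 0, ?_⟩
  rw [sum_mul_inducedChar τ ρ (f := fun g => (frobeniusChar α g : ℂ))
    fun s g => by rw [frobeniusChar_conj]]
  simp_rw [frobeniusChar_eq_sum, ← two_mul_card_alternatingGroup_eq_factorial ι]
  push_cast
  simp_rw [sum_mul, mul_assoc]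
  rw [sum_comm]
  congr 1
  rw [mul_sum]
  refine sum_congr rfl fun w _ => ?_
  split_ifs
  · rw [← mul_sum, hm]
    ring
  · simp

theorem exists_sum_charExtend_inv_mul_conj_eq (τ : Perm ι)
    (ρ : Representation ℂ (alternatingGroup ι) W) :
    ∃ d : ℕ, ∑ g, charExtend ρ g⁻¹ * charExtend ρ (τ * g * τ⁻¹)
      = Nat.card (alternatingGroup ι) * d := by
  simp_rw [← charExtend_conjRep, sum_charExtend_inv_mul_charExtend]
  exact exists_sum_character_inv_mul_eq ρ (conjRep τ ρ)

theorem exists_sum_inducedChar_and_sum_differenceChar_eq [Nontrivial ι] (τ : Perm ι)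
    (hρ : ∑ g, ρ.character g * ρ.character g⁻¹ = Nat.card (alternatingGroup ι)) :
    ∃ d : ℕ, ∑ g, inducedChar τ ρ g⁻¹ * inducedChar τ ρ g
        = (Fintype.card ι).factorial * (1 + d) ∧
      ∑ g, differenceChar τ ρ g⁻¹ * differenceChar τ ρ g
        = (Fintype.card ι).factorial * (1 - d) := by
  have hself : ∑ g, charExtend ρ g⁻¹ * charExtend ρ g = Nat.card (alternatingGroup ι) := by
    simp_rw [sum_charExtend_inv_mul_charExtend, ← hρ, mul_comm]
  obtain ⟨d, hcross⟩ := exists_sum_charExtend_inv_mul_conj_eq τ ρ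
  have hcross_inv : ∑ g, charExtend ρ (τ * g⁻¹ * τ⁻¹) * charExtend ρ g
      = Nat.card (alternatingGroup ι) * d := by
    rw [← hcross, ← Equiv.sum_comp (Equiv.inv _)]
    exact sum_congr rfl fun g _ => by simp [mul_comm]
  have hself_conj : ∑ g, charExtend ρ (τ * g⁻¹ * τ⁻¹) * charExtend ρ (τ * g * τ⁻¹)
      = Nat.card (alternatingGroup ι) := by
    rw [← hself, ← Equiv.sum_comp (MulAut.conj τ).toEquiv
      fun g => charExtend ρ g⁻¹ * charExtend ρ g]
    exact sum_congr rfl fun g _ => by simp [mul_assoc]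
  refine ⟨d, ?_, ?_⟩
  · simp_rw [inducedChar, add_mul, mul_add, sum_add_distrib, hself, hcross, hcross_inv, hself_conj,
      ← two_mul_card_alternatingGroup_eq_factorial ι]
    push_cast
    ring
  · simp_rw [differenceChar, sub_mul, mul_sub, sum_sub_distrib, hself, hcross, hcross_inv,
      hself_conj, ← two_mul_card_alternatingGroup_eq_factorial ι]
    push_cast
    ring

theorem sum_differenceChar_inv_mul_eq_sum_norm_sq (τ : Perm ι)
    (ρ : Representation ℂ (alternatingGroup ι) W) :
    ∑ g, differenceChar τ ρ g⁻¹ * differenceChar τ ρ g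
      = ((∑ g, ‖differenceChar τ ρ g‖ ^ 2 : ℝ) : ℂ) := by
  have hinv (g : Perm ι) :
      differenceChar τ ρ g⁻¹ = starRingEnd ℂ (differenceChar τ ρ g) := by
    simp only [differenceChar, map_sub, ← charExtend_inv, mul_assoc, mul_inv_rev, inv_inv]
  push_cast
  simp_rw [hinv, Complex.conj_mul']

theorem sum_norm_differenceChar_sq_le [Nontrivial ι] (τ : Perm ι)
    (hρ : ∑ g, ρ.character g * ρ.character g⁻¹ = Nat.card (alternatingGroup ι)) :
    ∑ g, ‖differenceChar τ ρ g‖ ^ 2 ≤ (Fintype.card ι).factorial := by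
  obtain ⟨d, -, hdiff⟩ := exists_sum_inducedChar_and_sum_differenceChar_eq τ hρ
  rw [sum_differenceChar_inv_mul_eq_sum_norm_sq] at hdiff
  have hsum : ∑ g, ‖differenceChar τ ρ g‖ ^ 2 = (Fintype.card ι).factorial * (1 - d : ℝ) := by
    exact_mod_cast hdiff
  rw [hsum]
  exact mul_le_of_le_one_right (Nat.cast_nonneg _) (sub_le_self _ (Nat.cast_nonneg d))

theorem exists_sum_inducedChar_inv_mul_eq [Nontrivial ι] (τ : Perm ι)
    (hρ : ∑ g, ρ.character g * ρ.character g⁻¹ = Nat.card (alternatingGroup ι)) :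
    ∃ d : ℕ, d ≤ 1 ∧ ∑ g, inducedChar τ ρ g⁻¹ * inducedChar τ ρ g
      = (Fintype.card ι).factorial * (1 + d) := by
  obtain ⟨d, hind, hdiff⟩ := exists_sum_inducedChar_and_sum_differenceChar_eq τ hρ
  refine ⟨d, ?_, hind⟩
  rw [sum_differenceChar_inv_mul_eq_sum_norm_sq] at hdiff
  have hsum : ∑ g, ‖differenceChar τ ρ g‖ ^ 2 = (Fintype.card ι).factorial * (1 - d : ℝ) := by
    exact_mod_cast hdiff
  have hnonneg : 0 ≤ (Fintype.card ι).factorial * (1 - d : ℝ) := hsum ▸ by positivity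
  have hd : (0 : ℝ) ≤ 1 - d :=
    nonneg_of_mul_nonneg_right hnonneg (Nat.cast_pos.2 (Nat.factorial_pos _))
  exact_mod_cast sub_nonneg.1 hd

end InducedCharacter

/-! ### Orders of elements on which an induced character does not vanish -/

section FrobeniusExpansion

variable {ι : Type*} [Fintype ι] [DecidableEq ι] {N : ℕ} {Θ : Perm ι → ℂ} {m : (Fin N → ℕ) → ℤ}

theorem sum_frobeniusChar_mul_sum_eq (a : (Fin N → ℕ) → ℤ) {β : Fin N → ℕ}
    (hβ : β ∈ strictExponents N (Fintype.card ι)) :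
    ∑ g : Perm ι, (frobeniusChar β g : ℂ) *
      ∑ α ∈ strictExponents N (Fintype.card ι), (a α : ℂ) * frobeniusChar α g
        = (Fintype.card ι).factorial * a β := by
  have horth (α) (hα : α ∈ strictExponents N (Fintype.card ι)) :
      ∑ g : Perm ι, (frobeniusChar β g : ℂ) * (a α * frobeniusChar α g)
        = if β = α then (Fintype.card ι).factorial * (a α : ℂ) else 0 := by
    have h := sum_frobeniusChar_mul_frobeniusChar_of_mem (ι := ι) hβ hα
    simp_rw [mul_left_comm _ (a α : ℂ), ← mul_sum]
    rw [show ∑ g : Perm ι, (frobeniusChar β g : ℂ) * frobeniusChar α g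
      = (Fintype.card ι).factorial * if β = α then 1 else 0 by exact_mod_cast h]
    split_ifs <;> ring
  simp_rw [mul_sum]
  rw [sum_comm, sum_congr rfl horth, sum_ite_eq, if_pos hβ]

theorem sum_mul_frobeniusChar_eq_zero_of_strictExponents {F : Perm ι → ℂ}
    (hF : ∀ β ∈ strictExponents N (Fintype.card ι), ∑ g, F g * (frobeniusChar β g : ℂ) = 0)
    (γ : Fin N → ℕ) : ∑ g, F g * (frobeniusChar γ g : ℂ) = 0 := by
  by_cases hγ : ∑ i, γ i = Fintype.card ι + ∑ i : Fin N, (i : ℕ)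
  · simp_rw [frobeniusChar_eq_sum_strictExponents hγ]
    push_cast
    simp_rw [mul_sum, mul_left_comm (F _)]
    rw [sum_comm]
    exact sum_eq_zero fun β hβ => by rw [← mul_sum, hF β hβ, mul_zero]
  · exact sum_eq_zero fun g _ => by rw [frobeniusChar_eq_zero_of_sum_ne hγ]; simp

theorem eq_sum_mul_frobeniusChar (hN : Fintype.card ι ≤ N)
    (hΘ : ∀ s g, Θ (s * g * s⁻¹) = Θ g)
    (hm : ∀ α, ∑ g, (frobeniusChar α g : ℂ) * Θ g = (Fintype.card ι).factorial * m α)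
    (g : Perm ι) :
    Θ g = ∑ α ∈ strictExponents N (Fintype.card ι), (m α : ℂ) * frobeniusChar α g := by
  rw [← sub_eq_zero]
  refine eq_zero_of_forall_sum_mul_frobeniusChar_eq_zero hN
    (F := fun g => Θ g - ∑ α ∈ strictExponents N (Fintype.card ι), (m α : ℂ) * frobeniusChar α g)
    (fun s g => by simp only [hΘ, frobeniusChar_conj])
    (sum_mul_frobeniusChar_eq_zero_of_strictExponents fun β hβ => ?_) g
  simp_rw [sub_mul, sum_sub_distrib, mul_comm _ (frobeniusChar β _ : ℂ)]
  rw [hm, sum_frobeniusChar_mul_sum_eq m hβ, sub_self]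

theorem sum_inv_mul_eq_factorial_mul_sum_sq
    (hexp : ∀ g, Θ g = ∑ α ∈ strictExponents N (Fintype.card ι), (m α : ℂ) * frobeniusChar α g) :
    ∑ g, Θ g⁻¹ * Θ g
      = (Fintype.card ι).factorial *
        (∑ α ∈ strictExponents N (Fintype.card ι), m α ^ 2 : ℤ) := by
  have hterm (g : Perm ι) : Θ g⁻¹ * Θ g
      = ∑ α ∈ strictExponents N (Fintype.card ι), m α * ((frobeniusChar α g : ℂ) * Θ g) := by
    rw [hexp g⁻¹, sum_mul]
    simp_rw [frobeniusChar_inv, mul_assoc]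
  simp_rw [hterm]
  rw [sum_comm, Int.cast_sum, mul_sum]
  refine sum_congr rfl fun α hα => ?_
  simp_rw [← mul_sum, hexp]
  rw [sum_frobeniusChar_mul_sum_eq m hα]
  push_cast
  ring

end FrobeniusExpansion

section CycleRemoval

variable {ι : Type*} [Fintype ι] {p : ι → Prop} [DecidablePred p] {c : Perm {x // p x}}

/-- The subgroup `⟨c⟩ × Sym {x | ¬ p x}` of the symmetric group. -/
def zpowersProdPerm (c : Perm {x // p x}) : Subgroup (Perm ι) :=
  ((Subgroup.zpowers c).prod ⊤).map (Perm.subtypeCongrHom p)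

theorem natCard_zpowersProdPerm (c : Perm {x // p x}) :
    Nat.card (zpowersProdPerm c) = orderOf c * (Fintype.card {x // ¬ p x}).factorial := by
  rw [zpowersProdPerm, Subgroup.card_map_of_injective (Perm.subtypeCongrHom_injective p),
    Nat.card_congr (Subgroup.prodEquiv _ _).toEquiv, Nat.card_prod, Nat.card_zpowers,
    Nat.card_congr Subgroup.topEquiv.toEquiv, Nat.card_perm, Nat.card_eq_fintype_card]

variable [DecidableEq ι] {N : ℕ} {Θ : Perm ι → ℂ} {m : (Fin N → ℕ) → ℤ}

/-- The function on the symmetric group supported on the permutations that act as `c` on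
`{x | p x}`, where its value is that of `F` at the restriction to `{x | ¬ p x}`. -/
def extendAlong (c : Perm {x // p x}) (F : Perm {x // ¬ p x} → ℤ) (g : Perm ι) : ℤ :=
  ∑ h, if g = c.subtypeCongr h then F h else 0

theorem extendAlong_conj {F : Perm {x // ¬ p x} → ℤ} (hF : ∀ s h, F (s * h * s⁻¹) = F h)
    {s : Perm ι} (hs : s ∈ zpowersProdPerm c) (g : Perm ι) :
    extendAlong c F (s⁻¹ * g * s) = extendAlong c F g := by
  obtain ⟨⟨d, t⟩, ⟨hd : d ∈ Subgroup.zpowers c, -⟩, rfl⟩ := hs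
  have hcomm : d * c * d⁻¹ = c := by
    obtain ⟨i, rfl⟩ := hd
    group
  have hconj (h : Perm {x // ¬ p x}) : c.subtypeCongr (t * h * t⁻¹)
      = Perm.subtypeCongrHom p (d, t) * c.subtypeCongr h * (Perm.subtypeCongrHom p (d, t))⁻¹ := by
    conv_lhs => rw [← hcomm]
    change Perm.subtypeCongrHom p (d * c * d⁻¹, t * h * t⁻¹) = _ * Perm.subtypeCongrHom p (c, h) * _
    rw [← map_mul, ← map_inv, ← map_mul]
    rfl
  rw [extendAlong, extendAlong, ← Equiv.sum_comp (MulAut.conj t).toEquiv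
    fun h => if g = c.subtypeCongr h then F h else 0]
  refine sum_congr rfl fun h _ => ?_
  simp only [MulEquiv.toEquiv_eq_coe, EquivLike.coe_coe, MulAut.conj_apply, hF, hconj,
    eq_mul_inv_iff_mul_eq]
  simp only [mul_assoc, inv_mul_eq_iff_eq_mul]

theorem sum_extendAlong_mul (c : Perm {x // p x}) (F : Perm {x // ¬ p x} → ℤ) (Θ : Perm ι → ℂ) :
    ∑ g, (extendAlong c F g : ℂ) * Θ g = ∑ h, (F h : ℂ) * Θ (c.subtypeCongr h) := by
  simp_rw [extendAlong, Int.cast_sum, sum_mul]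
  rw [sum_comm]
  simp [ite_mul]

/-- The coefficient of the Frobenius character of `β` in the class function
`h ↦ ∑ α, m α * frobeniusChar α (c * h)`, where `c` is a cycle of length `k` disjoint from `h` and
`n` is the number of points permuted by `c * h`. -/
noncomputable def removalMultiplicity (n k : ℕ) (m : (Fin N → ℕ) → ℤ) (β : Fin N → ℕ) : ℤ :=
  ∑ α ∈ strictExponents N n, m α * cycleRemovalCoeff k α β

theorem subtypeCongr_eq_sum_removalMultiplicity [Nonempty {x // p x}]
    (hexp : ∀ g, Θ g = ∑ α ∈ strictExponents N (Fintype.card ι), (m α : ℂ) * frobeniusChar α g)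
    (hc : ∀ x y, c.SameCycle x y) (h : Perm {x // ¬ p x}) :
    Θ (c.subtypeCongr h) = ∑ β ∈ strictExponents N (Fintype.card {x // ¬ p x}),
      (removalMultiplicity (Fintype.card ι) (Fintype.card {x // p x}) m β : ℂ) *
        frobeniusChar β h := by
  rw [hexp]
  simp_rw [removalMultiplicity, Int.cast_sum, sum_mul]
  rw [sum_comm]
  refine sum_congr rfl fun α hα => ?_
  rw [frobeniusChar_subtypeCongr_eq_sum p hc h hα]
  push_cast
  rw [mul_sum]
  exact sum_congr rfl fun β _ => by ring

theorem orderOf_dvd_mul_removalMultiplicity [Nonempty {x // p x}] {d M : ℕ}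
    (hdM : d * M = (Fintype.card ι).factorial) (hint : HasIntegralClassSums Θ d)
    (hconj : ∀ s g, Θ (s * g * s⁻¹) = Θ g)
    (hexp : ∀ g, Θ g = ∑ α ∈ strictExponents N (Fintype.card ι), (m α : ℂ) * frobeniusChar α g)
    (hc : ∀ x y, c.SameCycle x y) {β : Fin N → ℕ}
    (hβ : β ∈ strictExponents N (Fintype.card {x // ¬ p x})) :
    (orderOf c : ℤ) ∣
      M * removalMultiplicity (Fintype.card ι) (Fintype.card {x // p x}) m β := by
  obtain ⟨ω, hω, hsum⟩ := hint.exists_index_mul_sum_eq hconj (zpowersProdPerm c)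
    fun s hs g => extendAlong_conj (frobeniusChar_conj β) hs g
  have hindex : (zpowersProdPerm c).index * (orderOf c * (Fintype.card {x // ¬ p x}).factorial)
      = d * M := by
    rw [← natCard_zpowersProdPerm, Subgroup.index_mul_card, hdM, Nat.card_perm,
      Nat.card_eq_fintype_card]
  have hd : (d : ℂ) ≠ 0 := Nat.cast_ne_zero.2 fun h =>
    Nat.factorial_ne_zero (Fintype.card ι) (by rw [← hdM, h, zero_mul])
  simp_rw [sum_extendAlong_mul, subtypeCongr_eq_sum_removalMultiplicity hexp hc] at hsum
  rw [sum_frobeniusChar_mul_sum_eq _ hβ] at hsum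
  refine dvd_of_isIntegral_mul_eq (Int.natCast_ne_zero.2 (orderOf_pos c).ne') hω
    (mul_left_cancel₀ hd ?_)
  have hindex' : ((zpowersProdPerm c).index : ℂ) *
      (orderOf c * (Fintype.card {x // ¬ p x}).factorial) = d * M := by exact_mod_cast hindex
  push_cast
  linear_combination (removalMultiplicity _ _ m β : ℂ) * hindex' - orderOf c * hsum

theorem abs_cycleRemovalCoeff_le_one {k n n' : ℕ} (hk : 0 < k) {α β : Fin N → ℕ}
    (hα : α ∈ strictExponents N n) (hβ : β ∈ strictExponents N n') :
    |cycleRemovalCoeff k α β| ≤ 1 := by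
  obtain h | h | h := cycleRemovalCoeff_eq_zero_or hk (mem_strictExponents.1 hα).2
    (mem_strictExponents.1 hβ).2 <;> simp [h]

theorem abs_mul_le_sq {a e : ℤ} (he : |e| ≤ 1) : |a * e| ≤ a ^ 2 := by
  rw [abs_mul]
  exact (mul_le_of_le_one_right (abs_nonneg a) he).trans
    ((Int.abs_eq_natAbs a).trans_le (Int.natAbs_le_self_sq a))

theorem abs_removalMultiplicity_le {n n' k : ℕ} (hk : 0 < k) (m : (Fin N → ℕ) → ℤ)
    {β : Fin N → ℕ} (hβ : β ∈ strictExponents N n') :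
    |removalMultiplicity n k m β| ≤ ∑ α ∈ strictExponents N n, m α ^ 2 :=
  (abs_sum_le_sum_abs _ _).trans <| sum_le_sum fun _ hα =>
    abs_mul_le_sq (abs_cycleRemovalCoeff_le_one hk hα hβ)

theorem card_support_eq_two_of_two_le_abs_sum {A : Type*} {B : Finset A} {a e : A → ℤ}
    (ha : ∑ x ∈ B, a x ^ 2 ≤ 2) (he : ∀ x ∈ B, |e x| ≤ 1) (h : 2 ≤ |∑ x ∈ B, a x * e x|) :
    #{x ∈ B | a x ≠ 0} = 2 ∧ ∀ x ∈ B, a x ≠ 0 → e x ≠ 0 := by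
  have hle (x) (hx : x ∈ B) : |a x * e x| ≤ a x ^ 2 := abs_mul_le_sq (he x hx)
  have habs : ∑ x ∈ B, |a x * e x| ≤ ∑ x ∈ B, a x ^ 2 := sum_le_sum hle
  have htri := abs_sum_le_sum_abs (fun x => a x * e x) B
  have heq := (sum_eq_sum_iff_of_le hle).1 (by lia)
  have hsq (x) (hx : x ∈ B) : a x ^ 2 = if a x ≠ 0 then 1 else 0 := by
    split_ifs with hax
    · have hmul : |a x| * |e x| = |a x| * |a x| := by
        rw [← abs_mul, heq x hx, abs_mul_abs_self, sq]
      have hea : |e x| = |a x| := mul_left_cancel₀ (abs_ne_zero.2 hax) hmul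
      have : 0 < |a x| := abs_pos.2 hax
      have hone : |a x| = 1 := by have := he x hx; lia
      rw [← sq_abs, hone, one_pow]
    · rw [not_not.1 hax, zero_pow two_ne_zero]
  refine ⟨?_, fun x hx hax hex => hax (pow_eq_zero_iff two_ne_zero |>.1 ?_)⟩
  · have hcard : (#{x ∈ B | a x ≠ 0} : ℤ) = ∑ x ∈ B, a x ^ 2 := by
      rw [sum_congr rfl hsq, card_filter]
      push_cast
      rfl
    lia
  · rw [← heq x hx, hex, mul_zero, abs_zero]

theorem eq_of_abs_removalMultiplicity_eq_two {n n' k : ℕ} (hk : 0 < k)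
    (hm : ∑ α ∈ strictExponents N n, m α ^ 2 ≤ 2) {β γ : Fin N → ℕ}
    (hβ : β ∈ strictExponents N n') (hγ : γ ∈ strictExponents N n')
    (hβtwo : |removalMultiplicity n k m β| = 2) (hγtwo : |removalMultiplicity n k m γ| = 2) :
    β = γ := by
  obtain ⟨hcard, hneβ⟩ := card_support_eq_two_of_two_le_abs_sum hm
    (fun α hα => abs_cycleRemovalCoeff_le_one hk hα hβ) hβtwo.ge
  obtain ⟨-, hneγ⟩ := card_support_eq_two_of_two_le_abs_sum hm
    (fun α hα => abs_cycleRemovalCoeff_le_one hk hα hγ) hγtwo.ge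
  obtain ⟨α, hα, α', hα', hαα'⟩ := one_lt_card.1 (hcard ▸ Nat.one_lt_two)
  obtain ⟨hα, hmα⟩ := mem_filter.1 hα
  obtain ⟨hα', hmα'⟩ := mem_filter.1 hα'
  exact eq_of_cycleRemovalCoeff_ne_zero hk (mem_strictExponents.1 hα).2
    (mem_strictExponents.1 hα').2 (mem_strictExponents.1 hβ).2 (mem_strictExponents.1 hγ).2 hαα'
    (hneβ α hα hmα) (hneβ α' hα' hmα') (hneγ α hα hmα) (hneγ α' hα' hmα')

theorem sign_eq_neg_one_of_even_orderOf {c : Perm ι} (hc : ∀ x y, c.SameCycle x y)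
    (heven : Even (orderOf c)) : Perm.sign c = -1 := by
  obtain ⟨x, hx⟩ : ∃ x, c x ≠ x := by
    by_contra! hfix
    have hone : c = 1 := Equiv.ext hfix
    simp [hone] at heven
  have hcycle : c.IsCycle := ⟨x, hx, fun y _ => hc x y⟩
  rw [hcycle.sign, ← hcycle.orderOf, heven.neg_one_pow]

theorem exists_removalMultiplicity_ne_zero [Nonempty {x // p x}]
    (hexp : ∀ g, Θ g = ∑ α ∈ strictExponents N (Fintype.card ι), (m α : ℂ) * frobeniusChar α g)
    (hc : ∀ x y, c.SameCycle x y) {h : Perm {x // ¬ p x}} (hne : Θ (c.subtypeCongr h) ≠ 0) :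
    ∃ β ∈ strictExponents N (Fintype.card {x // ¬ p x}),
      removalMultiplicity (Fintype.card ι) (Fintype.card {x // p x}) m β ≠ 0 := by
  rw [subtypeCongr_eq_sum_removalMultiplicity hexp hc] at hne
  obtain ⟨β, hβ, hterm⟩ := exists_ne_zero_of_sum_ne_zero hne
  exact ⟨β, hβ, Int.cast_ne_zero.1 (left_ne_zero_of_mul hterm)⟩

theorem exists_abs_removalMultiplicity_eq_one_of_even [Nonempty {x // p x}]
    (hexp : ∀ g, Θ g = ∑ α ∈ strictExponents N (Fintype.card ι), (m α : ℂ) * frobeniusChar α g)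
    (hm : ∑ α ∈ strictExponents N (Fintype.card ι), m α ^ 2 ≤ 2)
    (hodd : ∀ g, Perm.sign g = -1 → Θ g = 0) (hc : ∀ x y, c.SameCycle x y)
    (heven : Even (orderOf c)) {h : Perm {x // ¬ p x}} (hne : Θ (c.subtypeCongr h) ≠ 0) :
    ∃ β ∈ strictExponents N (Fintype.card {x // ¬ p x}),
      |removalMultiplicity (Fintype.card ι) (Fintype.card {x // p x}) m β| = 1 := by
  by_contra! hnone
  have hk : 0 < Fintype.card {x // p x} := Fintype.card_pos
  have htwo {β} (hβ : β ∈ strictExponents N (Fintype.card {x // ¬ p x}))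
      (hne : removalMultiplicity (Fintype.card ι) (Fintype.card {x // p x}) m β ≠ 0) :
      |removalMultiplicity (Fintype.card ι) (Fintype.card {x // p x}) m β| = 2 := by
    have := (abs_removalMultiplicity_le (n := Fintype.card ι) hk m hβ).trans hm
    have := hnone β hβ
    have := abs_pos.2 hne
    lia
  obtain ⟨β, hβ, hβne⟩ := exists_removalMultiplicity_ne_zero hexp hc hne
  have hzero : Θ (c.subtypeCongr 1) = 0 :=
    hodd _ (by simp [Perm.sign_subtypeCongr, sign_eq_neg_one_of_even_orderOf hc heven])
  rw [subtypeCongr_eq_sum_removalMultiplicity hexp hc, sum_eq_single_of_mem β hβ] at hzero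
  · exact mul_ne_zero (Int.cast_ne_zero.2 hβne)
      (Int.cast_ne_zero.2 (frobeniusChar_one_pos hβ).ne') hzero
  · refine fun γ hγ hγβ => mul_eq_zero_of_left (Int.cast_eq_zero.2 ?_) _
    by_contra hγne
    exact hγβ (eq_of_abs_removalMultiplicity_eq_two hk hm hγ hβ (htwo hγ hγne)
      (htwo hβ hβne))

theorem orderOf_cycle_dvd [Nonempty {x // p x}] {d M : ℕ}
    (hdM : d * M = (Fintype.card ι).factorial) (hint : HasIntegralClassSums Θ d)
    (hconj : ∀ s g, Θ (s * g * s⁻¹) = Θ g)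
    (hexp : ∀ g, Θ g = ∑ α ∈ strictExponents N (Fintype.card ι), (m α : ℂ) * frobeniusChar α g)
    (hm : ∑ α ∈ strictExponents N (Fintype.card ι), m α ^ 2 ≤ 2)
    (hodd : ∀ g, Perm.sign g = -1 → Θ g = 0) (hc : ∀ x y, c.SameCycle x y)
    {h : Perm {x // ¬ p x}} (hne : Θ (c.subtypeCongr h) ≠ 0) : orderOf c ∣ M := by
  have hdvd {β} (hβ : β ∈ strictExponents N (Fintype.card {x // ¬ p x})) : orderOf c ∣
      M * (removalMultiplicity (Fintype.card ι) (Fintype.card {x // p x}) m β).natAbs := by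
    simpa [Int.natCast_dvd, Int.natAbs_mul] using
      orderOf_dvd_mul_removalMultiplicity hdM hint hconj hexp hc hβ
  by_cases hone : ∃ β ∈ strictExponents N (Fintype.card {x // ¬ p x}),
      |removalMultiplicity (Fintype.card ι) (Fintype.card {x // p x}) m β| = 1
  · obtain ⟨β, hβ, hβone⟩ := hone
    have hβnat :
        (removalMultiplicity (Fintype.card ι) (Fintype.card {x // p x}) m β).natAbs = 1 := by
      zify
      exact hβone
    simpa [hβnat] using hdvd hβ
  have hnotEven : ¬ Even (orderOf c) := fun heven =>
    hone (exists_abs_removalMultiplicity_eq_one_of_even hexp hm hodd hc heven hne)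
  obtain ⟨β, hβ, hβne⟩ := exists_removalMultiplicity_ne_zero hexp hc hne
  have : |removalMultiplicity (Fintype.card ι) (Fintype.card {x // p x}) m β| ≠ 1 :=
    fun h => hone ⟨β, hβ, h⟩
  have hk : 0 < Fintype.card {x // p x} := Fintype.card_pos
  have := (abs_removalMultiplicity_le (n := Fintype.card ι) hk m hβ).trans hm
  have htwo : (removalMultiplicity (Fintype.card ι) (Fintype.card {x // p x}) m β).natAbs = 2 := by
    have := abs_pos.2 hβne
    zify
    lia
  exact (Nat.coprime_two_right.2 (Nat.not_even_iff_odd.1 hnotEven)).dvd_of_dvd_mul_right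
    (htwo ▸ hdvd hβ)

theorem exists_sameCycle_subtypeCongr_eq (g : Perm ι) (x : ι) :
    ∃ (c : Perm {y // g.SameCycle x y}) (h : Perm {y // ¬ g.SameCycle x y}),
      (∀ a b, c.SameCycle a b) ∧ c.subtypeCongr h = g := by
  have hiff (y : ι) : g.SameCycle x (g y) ↔ g.SameCycle x y := Perm.sameCycle_apply_right
  refine ⟨g.subtypePerm hiff, g.subtypePerm fun y => not_congr (hiff y), fun a b => ?_, ?_⟩
  · exact Perm.sameCycle_subtypePerm.2 (a.2.symm.trans b.2)
  · ext y
    by_cases hy : g.SameCycle x y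
    · rw [Perm.subtypeCongr.left_apply _ _ hy, Perm.subtypePerm_apply]
    · rw [Perm.subtypeCongr.right_apply _ _ hy, Perm.subtypePerm_apply]

theorem orderOf_dvd_of_forall_cycle_dvd {M : ℕ} {g : Perm ι}
    (hM : ∀ x (c : Perm {y // g.SameCycle x y}) (h : Perm {y // ¬ g.SameCycle x y}),
      (∀ a b, c.SameCycle a b) → c.subtypeCongr h = g → orderOf c ∣ M) : orderOf g ∣ M := by
  refine orderOf_dvd_of_pow_eq_one (Equiv.ext fun x => ?_)
  obtain ⟨c, h, hc, hg⟩ := exists_sameCycle_subtypeCongr_eq g x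
  have hpow : g ^ M = (1 : Perm {y // g.SameCycle x y}).subtypeCongr (h ^ M) := by
    conv_lhs => rw [← hg]
    rw [← orderOf_dvd_iff_pow_eq_one.1 (hM x c h hc hg)]
    exact (map_pow (Perm.subtypeCongrHom _) (c, h) M).symm
  rw [hpow, Perm.subtypeCongr.left_apply _ _ (Perm.SameCycle.refl g x)]
  rfl

end CycleRemoval

section InducedCharacterOrder

variable {ι W : Type*} [Fintype ι] [DecidableEq ι] [AddCommGroup W] [Module ℂ W]
  [FiniteDimensional ℂ W] {ρ : Representation ℂ (alternatingGroup ι) W} {τ : Perm ι}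

theorem inducedChar_eq_zero_of_sign_eq_neg_one {W : Type*} [AddCommGroup W] [Module ℂ W]
    (τ : Perm ι) (ρ : Representation ℂ (alternatingGroup ι) W) {g : Perm ι}
    (hg : Perm.sign g = -1) : inducedChar τ ρ g = 0 := by
  rw [inducedChar, charExtend_of_notMem, charExtend_of_notMem, add_zero] <;>
    simp [hg, Perm.mem_alternatingGroup]

theorem exists_inducedChar_eq_sum_mul_frobeniusChar [Nontrivial ι] (hτ : Perm.sign τ = -1)
    (hρ : ∑ g, ρ.character g * ρ.character g⁻¹ = Nat.card (alternatingGroup ι)) :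
    ∃ m : (Fin (Fintype.card ι) → ℕ) → ℤ,
      (∀ g, inducedChar τ ρ g = ∑ α ∈ strictExponents (Fintype.card ι) (Fintype.card ι),
        (m α : ℂ) * frobeniusChar α g) ∧
      ∑ α ∈ strictExponents (Fintype.card ι) (Fintype.card ι), m α ^ 2 ≤ 2 := by
  choose m hm using exists_sum_frobeniusChar_mul_inducedChar_eq (N := Fintype.card ι) τ ρ
  have hexp := eq_sum_mul_frobeniusChar le_rfl (inducedChar_conj hτ ρ) hm
  obtain ⟨d, hd, hnorm⟩ := exists_sum_inducedChar_inv_mul_eq τ hρ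
  have hfact : ((Fintype.card ι).factorial : ℂ) ≠ 0 :=
    Nat.cast_ne_zero.2 (Nat.factorial_ne_zero _)
  have hsq : (∑ α ∈ strictExponents (Fintype.card ι) (Fintype.card ι), m α ^ 2 : ℤ) = 1 + d := by
    exact_mod_cast mul_left_cancel₀ hfact
      ((sum_inv_mul_eq_factorial_mul_sum_sq hexp).symm.trans hnorm)
  exact ⟨m, hexp, by lia⟩

theorem orderOf_dvd_of_inducedChar_ne_zero [Nontrivial ι] (hτ : Perm.sign τ = -1)
    (hρ : ∑ g, ρ.character g * ρ.character g⁻¹ = Nat.card (alternatingGroup ι)) {M : ℕ}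
    (hM : Nat.card (alternatingGroup ι) = Module.finrank ℂ W * M) {g : Perm ι}
    (hg : inducedChar τ ρ g ≠ 0) : orderOf g ∣ M := by
  obtain ⟨m, hexp, hm⟩ := exists_inducedChar_eq_sum_mul_frobeniusChar hτ hρ
  have hdM : 2 * Module.finrank ℂ W * M = (Fintype.card ι).factorial := by
    rw [mul_assoc, ← hM, two_mul_card_alternatingGroup_eq_factorial]
  refine orderOf_dvd_of_forall_cycle_dvd fun x c h hc hch => ?_
  have : Nonempty {y // g.SameCycle x y} := ⟨⟨x, .refl g x⟩⟩
  exact orderOf_cycle_dvd hdM (hasIntegralClassSums_inducedChar τ hρ) (inducedChar_conj hτ ρ)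
    hexp hm (fun _ => inducedChar_eq_zero_of_sign_eq_neg_one τ ρ) hc (hch ▸ hg)

end InducedCharacterOrder

/-! ### Idempotents supported on even permutations -/

section FamilySums

variable {G H J J' : Type*} [Group G] [Group H] [Fintype J] [Fintype J']

theorem mapDomainAlgHom_sum_smul_of (f : G →* H) (a : J → ℂ) (y : J → G) :
    MonoidAlgebra.mapDomainAlgHom ℂ ℂ f (∑ j, a j • MonoidAlgebra.of ℂ G (y j)) =
      ∑ j, a j • MonoidAlgebra.of ℂ H (f (y j)) := by
  simp [map_sum, MonoidAlgebra.mapDomain_single]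

theorem isIdempotentElem_sum_smul_of_map (f : G →* H) {a : J → ℂ} {y : J → G}
    (he : IsIdempotentElem (∑ j, a j • MonoidAlgebra.of ℂ G (y j))) :
    IsIdempotentElem (∑ j, a j • MonoidAlgebra.of ℂ H (f (y j))) :=
  mapDomainAlgHom_sum_smul_of f a y ▸ he.map (MonoidAlgebra.mapDomainAlgHom ℂ ℂ f)

theorem isIdempotentElem_sum_smul_of_mul {a : J → ℂ} {y : J → G} {a' : J' → ℂ} {y' : J' → G}
    (he : IsIdempotentElem (∑ j, a j • MonoidAlgebra.of ℂ G (y j)))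
    (he' : IsIdempotentElem (∑ j, a' j • MonoidAlgebra.of ℂ G (y' j)))
    (hcomm : ∀ j', Commute (∑ j, a j • MonoidAlgebra.of ℂ G (y j))
      (MonoidAlgebra.of ℂ G (y' j'))) :
    IsIdempotentElem
      (∑ j : J × J', (a j.1 * a' j.2) • MonoidAlgebra.of ℂ G (y j.1 * y' j.2)) := by
  have hprod : ∑ j : J × J', (a j.1 * a' j.2) • MonoidAlgebra.of ℂ G (y j.1 * y' j.2) =
      (∑ j, a j • MonoidAlgebra.of ℂ G (y j)) * ∑ j, a' j • MonoidAlgebra.of ℂ G (y' j) := by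
    simp only [sum_mul_sum, Fintype.sum_prod_type, smul_mul_smul_comm, map_mul]
  rw [hprod]
  exact he.mul_of_commute (.sum_right _ _ _ fun j' _ => (hcomm j').smul_right _) he'

end FamilySums

section DifferenceCharacter

variable {ι W J : Type*} [Fintype ι] [DecidableEq ι] [AddCommGroup W] [Module ℂ W]
  [FiniteDimensional ℂ W] [Fintype J]

theorem exists_sum_mul_differenceChar_eq_of_isIdempotentElem (τ : Perm ι)
    (ρ : Representation ℂ (alternatingGroup ι) W) {a : J → ℂ} {y : J → Perm ι}
    (hy : ∀ j, y j ∈ alternatingGroup ι)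
    (he : IsIdempotentElem (∑ j, a j • MonoidAlgebra.of ℂ (Perm ι) (y j))) :
    ∃ b : ℤ, ∑ j, a j * differenceChar τ ρ (y j) = b := by
  lift y to J → alternatingGroup ι using hy
  have he' : IsIdempotentElem (∑ j, a j • MonoidAlgebra.of ℂ (alternatingGroup ι) (y j)) := by
    refine MonoidAlgebra.mapDomain_injective (alternatingGroup ι).subtype_injective ?_
    change MonoidAlgebra.mapDomainAlgHom ℂ ℂ (alternatingGroup ι).subtype _ =
      MonoidAlgebra.mapDomainAlgHom ℂ ℂ (alternatingGroup ι).subtype _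
    rw [map_mul, mapDomainAlgHom_sum_smul_of]
    exact he
  obtain ⟨m, hm⟩ := exists_sum_mul_character_eq_of_isIdempotentElem he' ρ
  obtain ⟨m', hm'⟩ := exists_sum_mul_character_eq_of_isIdempotentElem he' (conjRep τ ρ)
  refine ⟨m - m', ?_⟩
  simp only [← charExtend_coe, charExtend_conjRep] at hm hm'
  push_cast
  simp only [← hm, ← hm', ← sum_sub_distrib, differenceChar, mul_sub]

end DifferenceCharacter

section SubtypeCongr

variable {T : Type*} {p : T → Prop} [DecidablePred p]

theorem subtypeCongr_eq_mul (c : Perm {x // p x}) (h : Perm {x // ¬ p x}) :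
    c.subtypeCongr h = (Perm.subtypeCongrHom p).comp (.inl _ _) c *
      (Perm.subtypeCongrHom p).comp (.inr _ _) h := by
  rw [MonoidHom.comp_apply, MonoidHom.comp_apply, ← map_mul, MonoidHom.inl_apply,
    MonoidHom.inr_apply, Prod.mk_mul_mk, mul_one, one_mul, Perm.subtypeCongrHom_apply]

theorem commute_subtypeCongrHom_inl_inr (c : Perm {x // p x}) (h : Perm {x // ¬ p x}) :
    Commute ((Perm.subtypeCongrHom p).comp (.inl _ _) c)
      ((Perm.subtypeCongrHom p).comp (.inr _ _) h) :=
  (MonoidHom.commute_inl_inr c h).map (Perm.subtypeCongrHom p)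

end SubtypeCongr

section EvenIdempotents

variable {T X : Type} [Fintype T] [DecidableEq T] [Fintype X] [DecidableEq X]

/-- Complex functions on the symmetric group that a conjugation multiplies by the sign of the
conjugating permutation. -/
def IsSignClassFunction (F : Perm T → ℂ) : Prop :=
  ∀ s y, F (s * y * s⁻¹) = ((Perm.sign s : ℤ) : ℂ) * F y

/-- There is an idempotent `∑ j, a j • y j` of the group algebra, supported on even permutations,
on which every sign class function `F` takes the value `u * F g`, where `u ^ 2 * Q = ± 1`. -/
def HasEvenIdempotent (g : Perm T) (Q : ℕ) : Prop :=
  ∃ (J : Type) (_ : Fintype J) (a : J → ℂ) (y : J → Perm T) (u : ℂ),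
    (∀ j, y j ∈ alternatingGroup T) ∧
    IsIdempotentElem (∑ j, a j • MonoidAlgebra.of ℂ (Perm T) (y j)) ∧
    u ^ 4 * Q ^ 2 = 1 ∧
    ∀ F : Perm T → ℂ, IsSignClassFunction F → ∑ j, a j * F (y j) = u * F g

theorem hasEvenIdempotent_one : HasEvenIdempotent (1 : Perm T) 1 := by
  refine ⟨Unit, inferInstance, 1, 1, 1, fun _ => one_mem _, ?_, by simp, by simp⟩
  simp only [univ_unique, sum_singleton, Pi.one_apply, map_one, one_smul]
  exact .one

theorem IsSignClassFunction.comp_mul_right {F : Perm X → ℂ} (hF : IsSignClassFunction F)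
    (f : Perm T →* Perm X) (hf : ∀ s, Perm.sign (f s) = Perm.sign s) {k : Perm X}
    (hk : ∀ s, Commute k (f s)) : IsSignClassFunction fun y => F (f y * k) := fun s y => by
  beta_reduce
  rw [← hf, ← hF, map_mul, map_mul, map_inv, mul_assoc, (hk s).inv_right.symm.eq]
  simp only [mul_assoc]

theorem HasEvenIdempotent.permCongr (e : T ≃ X) {g : Perm T} {Q : ℕ}
    (hg : HasEvenIdempotent g Q) : HasEvenIdempotent (e.permCongr g) Q := by
  obtain ⟨J, hJ, a, y, u, hy, he, hu, hF⟩ := hg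
  refine ⟨J, hJ, a, fun j => e.permCongr (y j), u, fun j => ?_,
    isIdempotentElem_sum_smul_of_map e.permCongrHom.toMonoidHom he, hu, fun F hF' => ?_⟩
  · rw [Perm.mem_alternatingGroup, Perm.sign_permCongr, ← Perm.mem_alternatingGroup]
    exact hy j
  · simpa using hF _ (hF'.comp_mul_right e.permCongrHom.toMonoidHom
      (fun s => Perm.sign_permCongr e s) fun _ => .one_left _)

variable {p : T → Prop} [DecidablePred p]

theorem IsSignClassFunction.sum_subtypeCongr {J J' : Type*} [Fintype J] [Fintype J']
    {F : Perm T → ℂ} (hF : IsSignClassFunction F) {a : J → ℂ} {y : J → Perm {x // p x}}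
    {a' : J' → ℂ} {y' : J' → Perm {x // ¬ p x}} {u u' : ℂ} {c : Perm {x // p x}}
    {h : Perm {x // ¬ p x}}
    (hy : ∀ F : Perm {x // p x} → ℂ, IsSignClassFunction F → ∑ j, a j * F (y j) = u * F c)
    (hy' : ∀ F : Perm {x // ¬ p x} → ℂ, IsSignClassFunction F → ∑ j, a' j * F (y' j) = u' * F h) :
    ∑ j : J × J', a j.1 * a' j.2 * F ((y j.1).subtypeCongr (y' j.2)) =
      u * u' * F (c.subtypeCongr h) := by
  have hleft (h : Perm {x // ¬ p x}) : IsSignClassFunction fun w : Perm {x // p x} =>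
      F (w.subtypeCongr h) := by
    simp only [subtypeCongr_eq_mul]
    exact hF.comp_mul_right _ (fun s => by simp [Perm.sign_subtypeCongr])
      fun s => (commute_subtypeCongrHom_inl_inr s h).symm
  have hright (c : Perm {x // p x}) : IsSignClassFunction fun v : Perm {x // ¬ p x} =>
      F (c.subtypeCongr v) := by
    simp only [subtypeCongr_eq_mul, (commute_subtypeCongrHom_inl_inr c _).eq]
    exact hF.comp_mul_right _ (fun s => by simp [Perm.sign_subtypeCongr])
      fun s => commute_subtypeCongrHom_inl_inr c s
  simp only [Fintype.sum_prod_type, mul_assoc, ← mul_sum]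
  simp only [hy' _ (hright _), mul_left_comm _ u', ← mul_sum, hy _ (hleft h)]

theorem HasEvenIdempotent.subtypeCongr {c : Perm {x // p x}} {h : Perm {x // ¬ p x}} {Q Q' : ℕ}
    (hc : HasEvenIdempotent c Q) (hh : HasEvenIdempotent h Q') :
    HasEvenIdempotent (c.subtypeCongr h) (Q * Q') := by
  obtain ⟨J, hJ, a, y, u, hy, he, hu, hF⟩ := hc
  obtain ⟨J', hJ', a', y', u', hy', he', hu', hF'⟩ := hh
  refine ⟨J × J', instFintypeProd J J', fun j => a j.1 * a' j.2,
    fun j => (y j.1).subtypeCongr (y' j.2), u * u', fun j => ?_, ?_, ?_,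
    fun F hsign => hsign.sum_subtypeCongr hF hF'⟩
  · rw [Perm.mem_alternatingGroup, Perm.sign_subtypeCongr, Perm.mem_alternatingGroup.1 (hy _),
      Perm.mem_alternatingGroup.1 (hy' _), one_mul]
  · simp only [subtypeCongr_eq_mul]
    have hl := isIdempotentElem_sum_smul_of_map ((Perm.subtypeCongrHom p).comp (.inl _ _)) he
    have hr := isIdempotentElem_sum_smul_of_map ((Perm.subtypeCongrHom p).comp (.inr _ _)) he'
    have hprod := isIdempotentElem_sum_smul_of_mul hl hr
    refine hprod fun j' => Commute.sum_left _ _ _ fun j _ => Commute.smul_left ?_ _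
    exact Commute.map (commute_subtypeCongrHom_inl_inr (y j) (y' j')) _
  · push_cast
    linear_combination u' ^ 4 * Q' ^ 2 * hu + hu'

end EvenIdempotents

/-! ### Gauss sums and the even idempotent of a wreath product step -/

section UnitMultiplication

/-- The permutations of `ZMod p` given by multiplication by a unit. -/
def unitMulPerm (p : ℕ) : (ZMod p)ˣ →* Perm (ZMod p) :=
  MulAction.toPermHom (ZMod p)ˣ (ZMod p)

theorem unitMulPerm_apply {p : ℕ} (r : (ZMod p)ˣ) (x : ZMod p) : unitMulPerm p r x = r * x :=
  rfl

variable {p : ℕ} [Fact p.Prime]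

theorem isCycle_unitMulPerm {g : (ZMod p)ˣ} (hg : ∀ r, r ∈ Subgroup.zpowers g) (hg1 : g ≠ 1) :
    (unitMulPerm p g).IsCycle := by
  refine ⟨1, by simpa [unitMulPerm_apply] using hg1, fun y hy => ?_⟩
  have hy0 : y ≠ 0 := by
    rintro rfl
    simp [unitMulPerm_apply] at hy
  obtain ⟨i, hi⟩ := Subgroup.mem_zpowers_iff.1 (hg (Units.mk0 y hy0))
  exact ⟨i, by rw [← map_zpow, hi, unitMulPerm_apply, mul_one, Units.val_mk0]⟩

theorem support_unitMulPerm {g : (ZMod p)ˣ} (hg1 : g ≠ 1) :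
    (unitMulPerm p g).support = univ.erase 0 := by
  ext y
  simp [unitMulPerm_apply, mul_left_eq_self₀, hg1]

theorem exists_sign_unitMulPerm_eq_neg_one (hp : p ≠ 2) :
    ∃ r, Perm.sign (unitMulPerm p r) = -1 := by
  have hprime : p.Prime := Fact.out
  obtain ⟨g, hg⟩ := IsCyclic.exists_generator (α := (ZMod p)ˣ)
  have hg1 : g ≠ 1 := by
    rintro rfl
    have : Fact (2 < p) := ⟨hprime.two_le.lt_of_ne' hp⟩
    exact ZMod.neg_one_ne_one (n := p) (by simpa [Units.ext_iff] using hg (-1))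
  refine ⟨g, ?_⟩
  rw [(isCycle_unitMulPerm hg hg1).sign, support_unitMulPerm hg1, card_erase_of_mem (mem_univ _),
    card_univ, ZMod.card, (hprime.even_sub_one hp).neg_one_pow]

variable (p) in
/-- The multiplicative character of `ZMod p` whose value at a unit `r` is the sign of the
permutation `x ↦ r * x`. -/
noncomputable def signMulChar : MulChar (ZMod p) ℂ :=
  MulChar.ofUnitHom
    ((Units.map (Int.castRingHom ℂ).toMonoidHom).comp (Perm.sign.comp (unitMulPerm p)))

theorem signMulChar_coe (r : (ZMod p)ˣ) :
    signMulChar p r = ((Perm.sign (unitMulPerm p r) : ℤ) : ℂ) := by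
  rw [signMulChar, MulChar.ofUnitHom_coe]
  rfl

theorem signMulChar_coe_eq (r : (ZMod p)ˣ) : signMulChar p r = 1 ∨ signMulChar p r = -1 := by
  rw [signMulChar_coe]
  rcases Int.units_eq_one_or (Perm.sign (unitMulPerm p r)) with h | h <;> simp [h]

theorem signMulChar_ne_one (hp : p ≠ 2) : signMulChar p ≠ 1 := by
  obtain ⟨r, hr⟩ := exists_sign_unitMulPerm_eq_neg_one hp
  intro h
  have hr' := signMulChar_coe r
  rw [h, hr, MulChar.one_apply_coe] at hr'
  norm_num at hr'

theorem isQuadratic_signMulChar : (signMulChar p).IsQuadratic := fun a => by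
  by_cases ha : a = 0
  · exact .inl (ha ▸ MulChar.map_zero _)
  · exact .inr (signMulChar_coe_eq (Units.mk0 a ha))

theorem gaussSum_signMulChar_pow_four (hp : p ≠ 2) :
    gaussSum (signMulChar p) ZMod.stdAddChar ^ 4 = (p : ℂ) ^ 2 := by
  have hsq := gaussSum_sq (signMulChar_ne_one hp) isQuadratic_signMulChar
    (ZMod.isPrimitive_stdAddChar p)
  have hneg : signMulChar p (-1) ^ 2 = 1 := by rw [← map_pow, neg_one_sq, map_one]
  rw [show 4 = 2 * 2 from rfl, pow_mul, hsq, mul_pow, hneg, one_mul, ZMod.card]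

end UnitMultiplication

section ProductPermutations

variable {A M : Type*}

variable (M) in
/-- The permutation of `A × M` that permutes the fibres according to `w`. -/
def blockPerm : Perm A →* Perm (A × M) where
  toFun w := prodCongrLeft fun _ => w
  map_one' := rfl
  map_mul' _ _ := rfl

theorem blockPerm_apply (w : Perm A) (x : A × M) : blockPerm M w x = (w x.1, x.2) :=
  rfl

variable [AddCommGroup M]

/-- The permutation of `A × M` that translates the fibre over `x` by `b x`. -/
def translatePerm (b : A → M) : Perm (A × M) :=
  prodCongrRight fun x => Equiv.addRight (b x)

theorem translatePerm_apply (b : A → M) (x : A × M) : translatePerm b x = (x.1, x.2 + b x.1) :=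
  rfl

theorem translatePerm_add (b d : A → M) :
    translatePerm (b + d) = translatePerm b * translatePerm d := by
  ext x <;> simp [translatePerm_apply, add_comm (b x.1), add_assoc]

theorem translatePerm_neg (b : A → M) : translatePerm (-b) = (translatePerm b)⁻¹ := by
  refine eq_inv_of_mul_eq_one_left ?_
  rw [← translatePerm_add, neg_add_cancel]
  ext x <;> simp [translatePerm_apply]

theorem blockPerm_mul_translatePerm (w : Perm A) (b : A → M) :
    blockPerm M w * translatePerm b = translatePerm (b ∘ ⇑w⁻¹) * blockPerm M w := by
  ext x <;> simp [translatePerm_apply, blockPerm_apply]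

/-- The permutation of `A × ZMod p` that multiplies every fibre by `r`. -/
def scalePerm (A : Type*) {p : ℕ} (r : (ZMod p)ˣ) : Perm (A × ZMod p) :=
  prodCongrRight fun _ => unitMulPerm p r

variable {p : ℕ}

theorem scalePerm_apply (r : (ZMod p)ˣ) (x : A × ZMod p) : scalePerm A r x = (x.1, r * x.2) :=
  rfl

theorem scalePerm_conj_translatePerm_mul_blockPerm (r : (ZMod p)ˣ) (b : A → ZMod p) (w : Perm A) :
    scalePerm A r * (translatePerm b * blockPerm (ZMod p) w) * (scalePerm A r)⁻¹ =
      translatePerm ((r : ZMod p) • b) * blockPerm (ZMod p) w := by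
  rw [mul_inv_eq_iff_eq_mul]
  ext x <;> simp [translatePerm_apply, blockPerm_apply, scalePerm_apply, mul_add]

variable [Fintype A] [DecidableEq A] [Fact p.Prime]

theorem sign_translatePerm (hp : p ≠ 2) (b : A → ZMod p) : Perm.sign (translatePerm b) = 1 := by
  have htwo : (2 : ZMod p) ≠ 0 := Ring.two_ne_zero (by rwa [ZMod.ringChar_zmod_n])
  have hb : b = (2 : ZMod p)⁻¹ • b + (2 : ZMod p)⁻¹ • b := by
    rw [← two_smul (ZMod p), smul_inv_smul₀ htwo]
  rw [hb, translatePerm_add, map_mul, Int.units_mul_self]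

theorem sign_blockPerm (hp : p ≠ 2) (w : Perm A) :
    Perm.sign (blockPerm (ZMod p) w) = Perm.sign w := by
  change Perm.sign (prodCongrLeft fun _ : ZMod p => w) = _
  rw [Perm.sign_prodCongrLeft, prod_const, card_univ, ZMod.card,
    Int.units_pow_eq_pow_mod_two, Nat.odd_iff.1 ((Fact.out : p.Prime).odd_of_ne_two hp), pow_one]

theorem sign_scalePerm (hA : Odd (Fintype.card A)) (r : (ZMod p)ˣ) :
    Perm.sign (scalePerm A r) = Perm.sign (unitMulPerm p r) := by
  rw [scalePerm, Perm.sign_prodCongrRight, prod_const, card_univ,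
    Int.units_pow_eq_pow_mod_two, Nat.odd_iff.1 hA, pow_one]

end ProductPermutations

section Coboundary

variable {A M : Type*} [Fintype A] [DecidableEq A] [AddCommGroup M]

/-- On the circle `A` every function is a constant concentrated at one point plus a coboundary,
since the differences `single x t - single (c x) t` are coboundaries. -/
theorem exists_eq_single_add_sub_comp_inv {c : Perm A} (hc : ∀ x y, c.SameCycle x y) (x₀ : A)
    (b : A → M) : ∃ d : A → M, b = Pi.single x₀ (∑ x, b x) + (d - d ∘ ⇑c⁻¹) := by
  let K := LinearMap.range (LinearMap.id - LinearMap.funLeft ℤ M ⇑c⁻¹)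
  have hstep (x : A) (t : M) : (Pi.single x t - Pi.single (c x) t : A → M) ∈ K := by
    refine ⟨Pi.single x t, funext fun y => ?_⟩
    simp [LinearMap.funLeft_apply, Pi.single_apply, Equiv.symm_apply_eq]
  have hpow (t : M) (i : ℕ) : (Pi.single ((c ^ i) x₀) t - Pi.single x₀ t : A → M) ∈ K := by
    induction i with
    | zero => simp
    | succ i ih =>
      rw [pow_succ', Perm.mul_apply, ← sub_sub_sub_cancel_left _ _ (Pi.single ((c ^ i) x₀) t)]
      simpa using K.sub_mem ih (hstep ((c ^ i) x₀) t)
  have hsum : b - Pi.single x₀ (∑ x, b x) = ∑ x, (Pi.single x (b x) - Pi.single x₀ (b x)) := by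
    rw [sum_sub_distrib, univ_sum_single]
    exact congrArg (b - ·) (map_sum (AddMonoidHom.single (fun _ : A => M) x₀) b univ)
  have hmem : b - Pi.single x₀ (∑ x, b x) ∈ K := hsum ▸ K.sum_mem fun x _ => by
    obtain ⟨i, hi⟩ := (hc x₀ x).exists_nat_pow_eq
    exact hi ▸ hpow _ i
  obtain ⟨d, hd⟩ := hmem
  exact ⟨d, eq_add_of_sub_eq' hd.symm⟩

end Coboundary

section SignClassFunctions

variable {A : Type} [Fintype A] [DecidableEq A] {p : ℕ} [Fact p.Prime]
  {F : Perm (A × ZMod p) → ℂ}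

theorem IsSignClassFunction.translatePerm_mul_blockPerm_eq_single (hF : IsSignClassFunction F)
    (hp : p ≠ 2) {c : Perm A} (hc : ∀ x y, c.SameCycle x y) (x₀ : A) (b : A → ZMod p) :
    F (translatePerm b * blockPerm (ZMod p) c) =
      F (translatePerm (Pi.single x₀ (∑ x, b x)) * blockPerm (ZMod p) c) := by
  obtain ⟨d, hd⟩ := exists_eq_single_add_sub_comp_inv hc x₀ b
  have hconj : translatePerm b * blockPerm (ZMod p) c = translatePerm d *
      (translatePerm (Pi.single x₀ (∑ x, b x)) * blockPerm (ZMod p) c) * (translatePerm d)⁻¹ := by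
    rw [← translatePerm_neg, mul_assoc, mul_assoc, blockPerm_mul_translatePerm, ← mul_assoc,
      ← mul_assoc, ← translatePerm_add, ← translatePerm_add]
    conv_lhs => rw [hd]
    congr 2
    ext x
    simp only [Pi.add_apply, Pi.sub_apply, Pi.neg_apply, Function.comp_apply]
    ring
  rw [hconj, hF, sign_translatePerm hp, Units.val_one, Int.cast_one, one_mul]

theorem IsSignClassFunction.translatePerm_smul_mul_blockPerm (hF : IsSignClassFunction F)
    (hA : Odd (Fintype.card A)) (r : (ZMod p)ˣ) (b : A → ZMod p) (c : Perm A) :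
    F (translatePerm ((r : ZMod p) • b) * blockPerm (ZMod p) c) =
      signMulChar p r * F (translatePerm b * blockPerm (ZMod p) c) := by
  rw [← scalePerm_conj_translatePerm_mul_blockPerm, hF, sign_scalePerm hA, signMulChar_coe]

theorem IsSignClassFunction.translatePerm_single_mul_blockPerm (hF : IsSignClassFunction F)
    (hp : p ≠ 2) (hA : Odd (Fintype.card A)) (c : Perm A) (x₀ : A) (s : ZMod p) :
    F (translatePerm (Pi.single x₀ s) * blockPerm (ZMod p) c) =
      signMulChar p s * F (translatePerm (Pi.single x₀ 1) * blockPerm (ZMod p) c) := by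
  by_cases hs : s = 0
  · obtain ⟨r, hr⟩ := exists_sign_unitMulPerm_eq_neg_one hp
    have hneg := hF.translatePerm_smul_mul_blockPerm hA r 0 c
    rw [smul_zero, signMulChar_coe, hr, Units.val_neg, Units.val_one, Int.cast_neg, Int.cast_one,
      neg_one_mul, self_eq_neg] at hneg
    rw [hs, Pi.single_zero, hneg, MulChar.map_zero, zero_mul]
  · have hunit := hF.translatePerm_smul_mul_blockPerm hA (Units.mk0 s hs) (Pi.single x₀ 1) c
    rwa [Units.val_mk0, ← Pi.single_smul, smul_eq_mul, mul_one] at hunit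

end SignClassFunctions

section TranslationIdempotent

variable {A : Type} [Fintype A] [DecidableEq A] {p : ℕ} [Fact p.Prime]

/-- The coefficients of the idempotent attached to the linear character
`b ↦ exp (2πi (∑ x, b x) / p)` of the group of translations of `A × ZMod p`. -/
noncomputable def translationWeight (b : A → ZMod p) : ℂ :=
  (Fintype.card (A → ZMod p) : ℂ)⁻¹ * ZMod.stdAddChar (∑ x, b x)

theorem translationWeight_comp (b : A → ZMod p) (w : Perm A) :
    translationWeight (b ∘ w) = translationWeight b := by
  simp only [translationWeight, Function.comp_apply, Equiv.sum_comp w b]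

theorem translationWeight_mul (b d : A → ZMod p) : translationWeight b * translationWeight d =
    (Fintype.card (A → ZMod p) : ℂ)⁻¹ * translationWeight (b + d) := by
  simp only [translationWeight, Pi.add_apply, sum_add_distrib, AddChar.map_add_eq_mul]
  ring

theorem isIdempotentElem_sum_translationWeight_smul :
    IsIdempotentElem (∑ b : A → ZMod p, translationWeight b •
      MonoidAlgebra.of ℂ (Perm (A × ZMod p)) (translatePerm b)) := by
  have hcard : (Fintype.card (A → ZMod p) : ℂ) ≠ 0 := Nat.cast_ne_zero.2 Fintype.card_ne_zero
  have hmul (b : A → ZMod p) : ∑ d : A → ZMod p, (translationWeight b * translationWeight d) •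
        MonoidAlgebra.of ℂ (Perm (A × ZMod p)) (translatePerm b * translatePerm d) =
      (Fintype.card (A → ZMod p) : ℂ)⁻¹ • ∑ d : A → ZMod p, translationWeight d •
        MonoidAlgebra.of ℂ (Perm (A × ZMod p)) (translatePerm d) := by
    rw [smul_sum]
    refine Fintype.sum_equiv (Equiv.addLeft b) _ _ fun d => ?_
    rw [translationWeight_mul, ← translatePerm_add, mul_smul, Equiv.coe_addLeft]
  rw [IsIdempotentElem, sum_mul_sum]
  simp only [smul_mul_smul_comm, ← map_mul, hmul]
  rw [sum_const, card_univ, ← Nat.cast_smul_eq_nsmul ℂ, smul_inv_smul₀ hcard]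

theorem commute_sum_translationWeight_smul_of_blockPerm (w : Perm A) :
    Commute (∑ b : A → ZMod p, translationWeight b •
      MonoidAlgebra.of ℂ (Perm (A × ZMod p)) (translatePerm b))
      (MonoidAlgebra.of ℂ _ (blockPerm (ZMod p) w)) := by
  rw [Commute, SemiconjBy, sum_mul, mul_sum]
  refine (Fintype.sum_equiv (w.arrowCongr (.refl (ZMod p))) _ _ fun b => ?_).symm
  change _ * _ = translationWeight (b ∘ ⇑w⁻¹) • _ * _
  rw [translationWeight_comp, mul_smul_comm, smul_mul_assoc, ← map_mul, ← map_mul,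
    blockPerm_mul_translatePerm]
  rfl

theorem sum_apply_sum_eq [Nonempty A] (φ : ZMod p → ℂ) :
    (p : ℂ) * ∑ b : A → ZMod p, φ (∑ x, b x) = Fintype.card (A → ZMod p) * ∑ s, φ s := by
  obtain ⟨x₀⟩ := ‹Nonempty A›
  have hshift (s : ZMod p) :
      ∑ b : A → ZMod p, φ (∑ x, b x) = ∑ b : A → ZMod p, φ ((∑ x, b x) + s) := by
    rw [← Equiv.sum_comp (Equiv.addRight (Pi.single x₀ s : A → ZMod p))]
    simp [sum_add_distrib]
  calc (p : ℂ) * ∑ b : A → ZMod p, φ (∑ x, b x)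
      = ∑ s : ZMod p, ∑ b : A → ZMod p, φ ((∑ x, b x) + s) := by
        rw [← sum_congr rfl fun s _ => hshift s, sum_const, card_univ, ZMod.card, nsmul_eq_mul]
    _ = ∑ _b : A → ZMod p, ∑ s, φ s := by
        rw [sum_comm]
        exact sum_congr rfl fun b _ => Equiv.sum_comp (Equiv.addLeft (∑ x, b x)) φ
    _ = Fintype.card (A → ZMod p) * ∑ s, φ s := by rw [sum_const, card_univ, nsmul_eq_mul]

variable {F : Perm (A × ZMod p) → ℂ}

theorem IsSignClassFunction.sum_translationWeight_mul (hF : IsSignClassFunction F) (hp : p ≠ 2) :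
    IsSignClassFunction fun w : Perm A =>
      ∑ b : A → ZMod p, translationWeight b * F (translatePerm b * blockPerm (ZMod p) w) := by
  intro s w
  rw [mul_sum]
  refine (Fintype.sum_equiv (s.arrowCongr (.refl (ZMod p))) _ _ fun b => ?_).symm
  have hconj : translatePerm (b ∘ ⇑s⁻¹) * blockPerm (ZMod p) (s * w * s⁻¹) =
      blockPerm (ZMod p) s * (translatePerm b * blockPerm (ZMod p) w) *
        (blockPerm (ZMod p) s)⁻¹ := by
    rw [← mul_assoc, blockPerm_mul_translatePerm, map_mul, map_mul, map_inv]
    simp only [mul_assoc]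
  change _ = translationWeight (b ∘ ⇑s⁻¹) * F (translatePerm (b ∘ ⇑s⁻¹) * _)
  rw [hconj, hF, sign_blockPerm hp, translationWeight_comp, mul_left_comm]

theorem IsSignClassFunction.sum_translationWeight_mul_eq (hF : IsSignClassFunction F)
    (hp : p ≠ 2) (hA : Odd (Fintype.card A)) {c : Perm A} (hc : ∀ x y, c.SameCycle x y) (x₀ : A) :
    ∑ b : A → ZMod p, translationWeight b * F (translatePerm b * blockPerm (ZMod p) c) =
      gaussSum (signMulChar p) ZMod.stdAddChar / p *
        F (translatePerm (Pi.single x₀ 1) * blockPerm (ZMod p) c) := by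
  have hcard : (Fintype.card (A → ZMod p) : ℂ) ≠ 0 := Nat.cast_ne_zero.2 Fintype.card_ne_zero
  have hp0 : (p : ℂ) ≠ 0 := Nat.cast_ne_zero.2 (Fact.out : p.Prime).ne_zero
  have : Nonempty A := ⟨x₀⟩
  have hterm (b : A → ZMod p) :
      translationWeight b * F (translatePerm b * blockPerm (ZMod p) c) =
        (Fintype.card (A → ZMod p) : ℂ)⁻¹ *
          F (translatePerm (Pi.single x₀ 1) * blockPerm (ZMod p) c) *
          (signMulChar p (∑ x, b x) * ZMod.stdAddChar (∑ x, b x)) := by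
    rw [hF.translatePerm_mul_blockPerm_eq_single hp hc x₀,
      hF.translatePerm_single_mul_blockPerm hp hA, translationWeight]
    ring
  have hgauss : ∑ b : A → ZMod p, signMulChar p (∑ x, b x) * ZMod.stdAddChar (∑ x, b x) =
      Fintype.card (A → ZMod p) * gaussSum (signMulChar p) ZMod.stdAddChar / p :=
    eq_div_of_mul_eq hp0 <| (mul_comm _ _).trans <|
      sum_apply_sum_eq fun s => signMulChar p s * ZMod.stdAddChar s
  rw [sum_congr rfl fun b _ => hterm b, ← mul_sum, hgauss]
  field_simp

theorem HasEvenIdempotent.translatePerm_mul_blockPerm (hp : p ≠ 2) (hA : Odd (Fintype.card A))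
    {c : Perm A} (hc : ∀ x y, c.SameCycle x y) (x₀ : A) {Q : ℕ} (h : HasEvenIdempotent c Q) :
    HasEvenIdempotent (translatePerm (Pi.single x₀ (1 : ZMod p)) * blockPerm (ZMod p) c)
      (p * Q) := by
  obtain ⟨J, hJ, a, y, u, hy, he, hu, hF⟩ := h
  have hp0 : (p : ℂ) ≠ 0 := Nat.cast_ne_zero.2 (Fact.out : p.Prime).ne_zero
  have hblock := isIdempotentElem_sum_smul_of_map (blockPerm (A := A) (ZMod p)) he
  have hprod := isIdempotentElem_sum_smul_of_mul
    (isIdempotentElem_sum_translationWeight_smul (A := A) (p := p)) hblock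
  refine ⟨(A → ZMod p) × J, instFintypeProd _ _, fun j => translationWeight j.1 * a j.2,
    fun j => translatePerm j.1 * blockPerm (ZMod p) (y j.2),
    gaussSum (signMulChar p) ZMod.stdAddChar / p * u, fun j => ?_, ?_, ?_, fun F hsign => ?_⟩
  · rw [Perm.mem_alternatingGroup, map_mul, sign_translatePerm hp, sign_blockPerm hp, one_mul,
      ← Perm.mem_alternatingGroup]
    exact hy _
  · exact hprod fun j => commute_sum_translationWeight_smul_of_blockPerm (y j)
  · rw [mul_pow, div_pow, gaussSum_signMulChar_pow_four hp]
    push_cast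
    field_simp
    exact hu
  · have hsum := hF _ (hsign.sum_translationWeight_mul hp)
    rw [hsign.sum_translationWeight_mul_eq hp hA hc x₀, ← mul_assoc, mul_comm u] at hsum
    rw [← hsum, Fintype.sum_prod_type_right]
    simp only [mul_sum, mul_left_comm, mul_assoc]

end TranslationIdempotent

/-! ### Even idempotents of permutations with odd cycles -/

section WreathCycle

variable {A : Type*} {p : ℕ} [DecidableEq A] {c : Perm A}

theorem translatePerm_single_mul_blockPerm_apply (c : Perm A) (x₀ x : A) (z : ZMod p) :
    (translatePerm (Pi.single x₀ (1 : ZMod p)) * blockPerm (ZMod p) c) (x, z) =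
      (c x, z + if c x = x₀ then 1 else 0) := by
  rw [Perm.mul_apply, blockPerm_apply, translatePerm_apply, Pi.single_apply]

theorem pow_translatePerm_single_mul_blockPerm_apply (c : Perm A) (x₀ x : A) (z : ZMod p) (i : ℕ) :
    ((translatePerm (Pi.single x₀ (1 : ZMod p)) * blockPerm (ZMod p) c) ^ i) (x, z) =
      ((c ^ i) x, z + ∑ j ∈ range i, if (c ^ (j + 1)) x = x₀ then 1 else 0) := by
  induction i with
  | zero => simp
  | succ i ih =>
    rw [pow_succ', Perm.mul_apply, ih, translatePerm_single_mul_blockPerm_apply, sum_range_succ,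
      ← Perm.mul_apply, ← pow_succ', add_assoc]

variable [Finite A]

theorem sameCycle_translatePerm_single_mul_blockPerm_add_one (c : Perm A) (x₀ : A) (z : ZMod p) :
    (translatePerm (Pi.single x₀ (1 : ZMod p)) * blockPerm (ZMod p) c).SameCycle
      (x₀, z) (x₀, z + 1) := by
  set m := Function.minimalPeriod c x₀
  have hperiod : (c ^ m) x₀ = x₀ := by
    rw [← Perm.iterate_eq_pow]
    exact Function.iterate_minimalPeriod
  have hm : 0 < m := Function.minimalPeriod_pos_of_mem_periodicPts <|
    Function.Injective.mem_periodicPts c.injective x₀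
  have hreturn {j : ℕ} (hj : j < m) : (c ^ (j + 1)) x₀ = x₀ ↔ j = m - 1 := by
    refine ⟨fun h => ?_, fun h => by rw [h, Nat.sub_add_cancel hm, hperiod]⟩
    have := Function.IsPeriodicPt.minimalPeriod_le j.succ_pos
      (show c^[j + 1] x₀ = x₀ by rwa [Perm.iterate_eq_pow])
    lia
  refine ⟨m, ?_⟩
  rw [zpow_natCast, pow_translatePerm_single_mul_blockPerm_apply, hperiod,
    sum_congr rfl fun j hj => if_congr (hreturn (mem_range.1 hj)) rfl rfl, sum_ite_eq',
    if_pos (mem_range.2 (Nat.sub_one_lt_of_lt hm))]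

theorem sameCycle_translatePerm_single_mul_blockPerm [NeZero p]
    (hc : ∀ x y, c.SameCycle x y) (x₀ : A) (v w : A × ZMod p) :
    (translatePerm (Pi.single x₀ (1 : ZMod p)) * blockPerm (ZMod p) c).SameCycle v w := by
  set σ := translatePerm (Pi.single x₀ (1 : ZMod p)) * blockPerm (ZMod p) c
  have hfibre (z : ℕ) : σ.SameCycle (x₀, 0) (x₀, z) := by
    induction z with
    | zero => exact Nat.cast_zero (R := ZMod p) ▸ .refl _ _
    | succ z ih =>
      exact Nat.cast_succ (R := ZMod p) z ▸
        ih.trans (sameCycle_translatePerm_single_mul_blockPerm_add_one c x₀ _)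
  have hbase (v : A × ZMod p) : σ.SameCycle v (x₀, 0) := by
    obtain ⟨i, hi⟩ := (hc v.1 x₀).exists_nat_pow_eq
    have hpow := pow_translatePerm_single_mul_blockPerm_apply c x₀ v.1 v.2 i
    rw [hi, ← ZMod.natCast_zmod_val (v.2 + _)] at hpow
    exact (show σ.SameCycle v _ from ⟨i, (zpow_natCast σ i).symm ▸ hpow⟩).trans (hfibre _).symm
  exact (hbase v).trans (hbase w).symm

end WreathCycle

theorem sameCycle_addRight_one {k : ℕ} [NeZero k] (x y : ZMod k) :
    (Equiv.addRight (1 : ZMod k)).SameCycle x y := by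
  refine ⟨(y - x).val, ?_⟩
  rw [zpow_natCast, ← Perm.iterate_eq_pow, coe_addRight, add_right_iterate_apply, nsmul_one,
    ZMod.natCast_zmod_val, add_sub_cancel]

theorem sameCycle_permCongr {T X : Type*} (e : T ≃ X) {c : Perm T} (hc : ∀ x y, c.SameCycle x y)
    (x y : X) : (e.permCongr c).SameCycle x y := by
  obtain ⟨i, hi⟩ := hc (e.symm x) (e.symm y)
  refine ⟨i, ?_⟩
  have hpow : e.permCongr c ^ i = e.permCongr (c ^ i) := (map_zpow e.permCongrHom c i).symm
  rw [hpow, permCongr_apply, hi, apply_symm_apply]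

section CycleType

variable {T : Type*} [Fintype T] [DecidableEq T]

theorem cycleType_subtypeCongr {p : T → Prop} [DecidablePred p] (c : Perm {x // p x})
    (h : Perm {x // ¬ p x}) : (c.subtypeCongr h).cycleType = c.cycleType + h.cycleType := by
  have hmul : c.subtypeCongr h = Perm.ofSubtype c * Perm.ofSubtype h := by
    ext x
    rw [Perm.mul_apply]
    by_cases hx : p x
    · rw [Perm.subtypeCongr.left_apply _ _ hx, Perm.ofSubtype_apply_of_not_mem h (not_not.2 hx),
        Perm.ofSubtype_apply_of_mem c hx]
    · rw [Perm.subtypeCongr.right_apply _ _ hx, Perm.ofSubtype_apply_of_mem h hx,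
        Perm.ofSubtype_apply_of_not_mem c (h ⟨x, hx⟩).2]
  have hdisjoint : Perm.Disjoint (Perm.ofSubtype c) (Perm.ofSubtype h) := fun x =>
    (em (p x)).symm.imp (Perm.ofSubtype_apply_of_not_mem c)
      fun hx => Perm.ofSubtype_apply_of_not_mem h (not_not.2 hx)
  rw [hmul, hdisjoint.cycleType_mul, Perm.cycleType_ofSubtype, Perm.cycleType_ofSubtype]

theorem prod_cycleType_eq_card_of_sameCycle [Nonempty T] {c : Perm T}
    (hc : ∀ x y, c.SameCycle x y) : c.cycleType.prod = Fintype.card T := by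
  by_cases hone : c = 1
  · subst hone
    have : Subsingleton T := ⟨fun x y => Perm.sameCycle_one.1 (hc x y)⟩
    rw [Perm.cycleType_one, Multiset.prod_zero]
    exact (Fintype.card_eq_one_iff_nonempty_unique.2 ⟨⟨⟨Classical.arbitrary T⟩,
      fun _ => Subsingleton.elim _ _⟩⟩).symm
  · obtain ⟨x, hx⟩ := not_forall.1 (mt Perm.ext hone)
    have hcycle : c.IsCycle := ⟨x, hx, fun y _ => hc x y⟩
    have hsupport : c.support = univ :=
      eq_univ_of_forall fun y => Perm.mem_support.2 (mt (hc x y).apply_eq_self_iff.2 hx)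
    rw [hcycle.cycleType, hsupport, Multiset.prod_singleton, card_univ]

end CycleType

section OddCycles

variable {T : Type} [Fintype T] [DecidableEq T]

theorem HasEvenIdempotent.of_cycleType_eq {g h : Perm T} {Q : ℕ} (hg : HasEvenIdempotent g Q)
    (htype : g.cycleType = h.cycleType) : HasEvenIdempotent h Q := by
  obtain ⟨s, rfl⟩ := isConj_iff.1 (Perm.isConj_iff_cycleType_eq.2 htype)
  exact hg.permCongr s

theorem hasEvenIdempotent_card_of_sameCycle {c : Perm T} (hc : ∀ x y, c.SameCycle x y)
    (hodd : Odd (Fintype.card T)) : HasEvenIdempotent c (Fintype.card T) := by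
  induction hk : Fintype.card T using Nat.strong_induction_on generalizing T with
  | _ k ih =>
  rw [hk] at hodd
  obtain rfl | hk1 := eq_or_ne k 1
  · have : Subsingleton T := Fintype.card_le_one_iff_subsingleton.1 hk.le
    exact Subsingleton.elim 1 c ▸ hasEvenIdempotent_one
  obtain ⟨k', hk'⟩ := k.minFac_dvd
  have : Fact k.minFac.Prime := ⟨Nat.minFac_prime hk1⟩
  have hp : k.minFac ≠ 2 := fun h =>
    hodd.not_two_dvd_nat ((Nat.minFac_eq_two_iff k).1 h)
  have hk'odd : Odd k' := (Nat.odd_mul.1 (hk' ▸ hodd)).2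
  have : NeZero k' := ⟨hk'odd.pos.ne'⟩
  have hlt : k' < k := by
    conv_rhs => rw [hk']
    exact lt_mul_left hk'odd.pos (Nat.minFac_prime hk1).one_lt
  have hblock := ih k' hlt (sameCycle_addRight_one (k := k')) (by rwa [ZMod.card]) (ZMod.card k')
  have hwreath := hblock.translatePerm_mul_blockPerm hp (by rwa [ZMod.card])
    sameCycle_addRight_one 0
  have e : ZMod k' × ZMod k.minFac ≃ T := Fintype.equivOfCardEq (by
    rw [Fintype.card_prod, ZMod.card, ZMod.card, hk, mul_comm, ← hk'])
  have hcycle := sameCycle_permCongr e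
    (sameCycle_translatePerm_single_mul_blockPerm (p := k.minFac) sameCycle_addRight_one 0)
  rw [← hk'] at hwreath
  exact (hwreath.permCongr e).of_cycleType_eq <|
    cycleType_eq_of_sameCycle_iff fun x y => iff_of_true (hcycle x y) (hc x y)

theorem hasEvenIdempotent_prod_cycleType {g : Perm T} (hodd : ∀ k ∈ g.cycleType, Odd k) :
    HasEvenIdempotent g g.cycleType.prod := by
  induction hN : Fintype.card T using Nat.strong_induction_on generalizing T with
  | _ N ih =>
  rcases isEmpty_or_nonempty T with hempty | ⟨⟨x⟩⟩
  · rw [Subsingleton.elim g 1, Perm.cycleType_one]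
    exact hasEvenIdempotent_one
  obtain ⟨c, h, hc, hg⟩ := exists_sameCycle_subtypeCongr_eq g x
  have htype : g.cycleType = c.cycleType + h.cycleType := by
    rw [← cycleType_subtypeCongr, hg]
  simp only [htype, Multiset.mem_add, or_imp, forall_and] at hodd
  have : Nonempty {y // g.SameCycle x y} := ⟨⟨x, .refl _ _⟩⟩
  have hcodd : Odd c.cycleType.prod :=
    Multiset.prod_induction Odd _ (fun _ _ => Odd.mul) odd_one hodd.1
  have hcard := prod_cycleType_eq_card_of_sameCycle hc
  have hcidem : HasEvenIdempotent c c.cycleType.prod := by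
    rw [hcard] at hcodd ⊢
    exact hasEvenIdempotent_card_of_sameCycle hc hcodd
  have hlt : Fintype.card {y // ¬ g.SameCycle x y} < N :=
    hN ▸ Fintype.card_subtype_lt (x := x) (not_not.2 (.refl _ _))
  have hprod := hcidem.subtypeCongr (ih _ hlt hodd.2 rfl)
  rwa [hg, ← Multiset.prod_add, ← htype] at hprod

end OddCycles

/-! ### Non-vanishing of the induced character -/

section SignClassFunctionBound

variable {T : Type} [Fintype T] [DecidableEq T] {F : Perm T → ℂ} {g : Perm T}

theorem IsSignClassFunction.centralizer_le_alternatingGroup (hF : IsSignClassFunction F)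
    (hg : F g ≠ 0) : Subgroup.centralizer {g} ≤ alternatingGroup T := by
  intro s hs
  have hconj : s * g * s⁻¹ = g := by
    rw [← Subgroup.mem_centralizer_iff.1 hs g rfl, mul_inv_cancel_right]
  refine (Int.units_eq_one_or (Perm.sign s)).resolve_right fun hsign => hg ?_
  have hneg := hF s g
  rw [hconj, hsign, Units.val_neg, Units.val_one, Int.cast_neg, Int.cast_one, neg_one_mul] at hneg
  exact self_eq_neg.1 hneg

theorem card_isConj_mul_prod_cycleType_eq_factorial
    (hg : Subgroup.centralizer {g} ≤ alternatingGroup T) :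
    #{h | IsConj g h} * g.cycleType.prod = (Fintype.card T).factorial := by
  obtain ⟨-, hfix, hcount⟩ := Perm.centralizer_le_alternating_iff.1 hg
  have hcard := Perm.card_isConj_mul_eq g
  have hfixed : (Fintype.card T - g.cycleType.sum).factorial = 1 :=
    Nat.factorial_eq_one.2 (Nat.sub_le_iff_le_add'.2 hfix)
  have hdistinct : ∏ k ∈ g.cycleType.toFinset, (g.cycleType.count k).factorial = 1 :=
    prod_eq_one fun k _ => Nat.factorial_eq_one.2 (hcount k)
  rwa [hfixed, hdistinct, one_mul, mul_one, Nat.subtype_card {h | IsConj g h} (by simp)] at hcard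

theorem IsSignClassFunction.norm_sq_le_prod_cycleType (hF : IsSignClassFunction F)
    (hsum : ∑ h, ‖F h‖ ^ 2 ≤ (Fintype.card T).factorial) (hg : F g ≠ 0) :
    ‖F g‖ ^ 2 ≤ g.cycleType.prod := by
  have hclass := card_isConj_mul_prod_cycleType_eq_factorial (hF.centralizer_le_alternatingGroup hg)
  have hconst {h : Perm T} (h_conj : IsConj g h) : ‖F h‖ ^ 2 = ‖F g‖ ^ 2 := by
    obtain ⟨s, rfl⟩ := isConj_iff.1 h_conj
    rw [hF, norm_mul]
    obtain hs | hs := Int.units_eq_one_or (Perm.sign s) <;> simp [hs]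
  have hpos : (0 : ℝ) < #{h | IsConj g h} :=
    Nat.cast_pos.2 (card_pos.2 ⟨g, (mem_filter_univ g).2 (.refl g)⟩)
  refine le_of_mul_le_mul_left ?_ hpos
  calc (#{h | IsConj g h} : ℝ) * ‖F g‖ ^ 2
      = ∑ h with IsConj g h, ‖F h‖ ^ 2 := by
        rw [sum_congr rfl fun h hh => hconst ((mem_filter_univ h).1 hh), sum_const, nsmul_eq_mul]
    _ ≤ ∑ h, ‖F h‖ ^ 2 :=
        sum_le_sum_of_subset_of_nonneg (subset_univ _) fun _ _ _ => by positivity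
    _ ≤ #{h | IsConj g h} * g.cycleType.prod := by exact_mod_cast hclass ▸ hsum

end SignClassFunctionBound

theorem pow_four_eq_sq_of_norm_sq_le {z u : ℂ} {b : ℤ} {Q : ℕ} (hu : u ^ 4 * Q ^ 2 = 1)
    (hb : u * z = b) (hz : z ≠ 0) (hle : ‖z‖ ^ 2 ≤ Q) : z ^ 4 = Q ^ 2 := by
  have hpow : z ^ 4 = (b : ℂ) ^ 4 * Q ^ 2 := by
    rw [← hb]
    linear_combination -z ^ 4 * hu
  have hQ : (0 : ℝ) < (Q : ℝ) ^ 2 := by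
    have hQ0 : Q ≠ 0 := by
      rintro rfl
      simp at hu
    positivity
  have hle' : (b : ℝ) ^ 4 * Q ^ 2 ≤ 1 * Q ^ 2 := by
    have hnorm : ‖z‖ ^ 4 = (b : ℝ) ^ 4 * Q ^ 2 := by
      rw [← norm_pow, hpow]
      simp [Even.pow_abs (show Even 4 by decide)]
    rw [← hnorm, one_mul, show ‖z‖ ^ 4 = (‖z‖ ^ 2) ^ 2 by ring]
    gcongr
  have hb0 : b ≠ 0 := by
    rintro rfl
    simp [hz] at hpow
  have hb_le : b ^ 4 ≤ 1 := by exact_mod_cast le_of_mul_le_mul_right hle' hQ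
  have hb_one : b ^ 4 = 1 := le_antisymm hb_le (Order.one_le_iff_pos.2 (by positivity))
  rw [hpow, ← Int.cast_pow, hb_one, Int.cast_one, one_mul]

section InducedCharacterNeZero

variable {ι : Type} [Fintype ι] [DecidableEq ι] {W : Type*} [AddCommGroup W] [Module ℂ W]
  [FiniteDimensional ℂ W] {ρ : Representation ℂ (alternatingGroup ι) W} {τ : Perm ι}

theorem differenceChar_pow_four_eq [Nontrivial ι] (hτ : Perm.sign τ = -1)
    (hρ : ∑ g, ρ.character g * ρ.character g⁻¹ = Nat.card (alternatingGroup ι)) {g : Perm ι}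
    (hg : differenceChar τ ρ g ≠ 0) : differenceChar τ ρ g ^ 4 = g.cycleType.prod ^ 2 := by
  have hsign : IsSignClassFunction (differenceChar τ ρ) := differenceChar_conj hτ ρ
  have hodd := (Perm.centralizer_le_alternating_iff.1 (hsign.centralizer_le_alternatingGroup hg)).1
  obtain ⟨J, hJ, a, y, u, hy, he, hu, hF⟩ := hasEvenIdempotent_prod_cycleType hodd
  obtain ⟨b, hb⟩ := exists_sum_mul_differenceChar_eq_of_isIdempotentElem τ ρ hy he
  rw [hF _ hsign] at hb
  exact pow_four_eq_sq_of_norm_sq_le hu hb hg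
    (hsign.norm_sq_le_prod_cycleType (sum_norm_differenceChar_sq_le τ hρ) hg)

theorem inducedChar_ne_zero_of_character_ne_zero [Nontrivial ι] (hτ : Perm.sign τ = -1)
    (hρ : ∑ g, ρ.character g * ρ.character g⁻¹ = Nat.card (alternatingGroup ι))
    {g : alternatingGroup ι} (hg : ρ.character g ≠ 0) : inducedChar τ ρ g ≠ 0 := by
  intro hzero
  have hdiff : differenceChar τ ρ g = 2 * ρ.character g := by
    rw [← charExtend_coe]
    unfold inducedChar at hzero
    unfold differenceChar
    linear_combination -hzero
  have hdiff0 : differenceChar τ ρ g ≠ 0 := hdiff ▸ mul_ne_zero two_ne_zero hg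
  have hsign : IsSignClassFunction (differenceChar τ ρ) := differenceChar_conj hτ ρ
  have hodd : Odd ((g : Perm ι).cycleType.prod ^ 2) := Odd.pow <|
    Multiset.prod_induction Odd _ (fun _ _ => Odd.mul) odd_one
      (Perm.centralizer_le_alternating_iff.1 (hsign.centralizer_le_alternatingGroup hdiff0)).1
  have hpow := differenceChar_pow_four_eq hτ hρ hdiff0
  have hdvd : (16 : ℤ) ∣ ((g : Perm ι).cycleType.prod ^ 2 : ℕ) := by
    refine dvd_of_isIntegral_mul_eq (by norm_num) ((isIntegral_character ρ g).pow 4) ?_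
    rw [Int.cast_natCast, Nat.cast_pow, Int.cast_ofNat, ← hpow, hdiff]
    ring
  exact hodd.not_two_dvd_nat ((by norm_num : 2 ∣ 16).trans (Int.natCast_dvd_natCast.1 hdvd))

end InducedCharacterNeZero

end AlternatingCharacter

/-- If `χ` is an irreducible complex character of the alternating group `Aₙ`
(`n ≥ 1`) and `g ∈ Aₙ` satisfies `χ(g) ≠ 0`, then `o(g)·χ(1)` divides `|Aₙ|`. -/
theorem orderOf_mul_degree_dvd_card_of_char_ne_zero_alternatingGroup
    (n : ℕ) (hn : 1 ≤ n)
    (V : FDRep ℂ ↥(alternatingGroup (Fin n))) (hV : CategoryTheory.Simple V)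
    (g : ↥(alternatingGroup (Fin n))) (hg : V.character g ≠ 0) :
    orderOf g * Module.finrank ℂ V ∣ Nat.card ↥(alternatingGroup (Fin n)) := by
  have hρ := (FDRep.simple_iff_char_is_norm_one (V := V)).1 hV
  obtain ⟨M, hM⟩ := AlternatingCharacter.finrank_dvd_natCard hρ
  obtain rfl | hn' := hn.eq_or_lt
  · rw [Subsingleton.elim g 1, orderOf_one, one_mul]
    exact AlternatingCharacter.finrank_dvd_natCard hρ
  have : Nontrivial (Fin n) := Fin.nontrivial_iff_two_le.2 hn'
  obtain ⟨i, j, hij⟩ := exists_pair_ne (Fin n)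
  have hτ := Equiv.Perm.sign_swap hij
  have horder := AlternatingCharacter.orderOf_dvd_of_inducedChar_ne_zero hτ hρ hM
    (AlternatingCharacter.inducedChar_ne_zero_of_character_ne_zero hτ hρ hg)
  rw [hM, mul_comm, ← Subgroup.orderOf_coe]
  exact mul_dvd_mul_left _ horder
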